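/- arXiv:2003.05274 — 6 statements merged into one kernel-verified Lean document; each statement's English description precedes it below -/
import Mathlib

section
/- Under Assumption 3, the two joint rate functions satisfy the fluctuation relation J_P(m,w) = J_Q(m,w) + w for every pair (m,w) in their common domain of finiteness (Proposition 1). -/
open MeasureTheory Filter Set Topology
open scoped ENNReal NNReal

/-- A sequence of measures satisfies the large deviation principle with rate function `I`:
upper bound over closed sets and lower bound over open sets, at exponential speed `n`. -/
def SatisfiesLDP {X : Type*} [TopologicalSpace X] [MeasurableSpace X]
    (mu : ℕ → Measure X) (I : X → ℝ≥0∞) : Prop :=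
  (∀ F : Set X, IsClosed F →
      limsup (fun n : ℕ => (((n : ℝ)⁻¹ : ℝ) : EReal) * ENNReal.log (mu n F)) atTop
        ≤ -(⨅ x ∈ F, (I x : EReal))) ∧
  (∀ G : Set X, IsOpen G →
      -(⨅ x ∈ G, (I x : EReal)) ≤
        liminf (fun n : ℕ => (((n : ℝ)⁻¹ : ℝ) : EReal) * ENNReal.log (mu n G)) atTop)

/-- A good rate function: lower semicontinuous with compact sublevel sets. -/
def IsGoodRate {X : Type*} [TopologicalSpace X] (I : X → ℝ≥0∞) : Prop :=
  LowerSemicontinuous I ∧ ∀ c : ℝ≥0∞, c ≠ ⊤ → IsCompact {x | I x ≤ c}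

/-- The subdifferential of an extended-real-valued function on ℝ at a point. -/
def Subdiff (f : ℝ → EReal) (x : ℝ) : Set ℝ :=
  {k | ∀ y : ℝ, f x + ((k * (y - x) : ℝ) : EReal) ≤ f y}

/-- `(1/n) log x` as an extended real number. -/
noncomputable def expRate (n : ℕ) (x : ℝ≥0∞) : EReal :=
  (((n : ℝ)⁻¹ : ℝ) : EReal) * ENNReal.log x

/-- The action `W_n = -(1/n) log (dP/dQ)`. -/
noncomputable def action {Λ : Type*} [MeasurableSpace Λ]
    (P Q : Measure Λ) (n : ℕ) (x : Λ) : ℝ :=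
  -(n : ℝ)⁻¹ * Real.log ((P.rnDeriv Q) x).toReal


lemma ldp_aux {X : Type*} [MetricSpace X] [MeasurableSpace X] (μ ν : ℕ → Measure X)
    (I K : X → ℝ≥0∞) (hμ : SatisfiesLDP μ I) (hν : SatisfiesLDP ν K)
    (hK : LowerSemicontinuous K) (p : X) (hp : I p ≠ ⊤) (a : ℝ)
    (h : ∀ δ : ℝ, 0 < δ → ∀ n : ℕ, 1 ≤ n → μ n (Metric.closedBall p δ) ≤
      ENNReal.ofReal (Real.exp (n * (a + δ))) * ν n (Metric.closedBall p δ)) :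
    (K p : EReal) ≤ (I p : EReal) + (a : EReal) := by
  by_contra hcon
  push Not at hcon
  have hx : (I p : EReal) = (((I p).toReal : ℝ) : EReal) := by
    rw [EReal.coe_ennreal_toReal hp]
  set x := (I p).toReal
  have hx0 : 0 ≤ x := ENNReal.toReal_nonneg
  rw [hx, ← EReal.coe_add] at hcon
  obtain ⟨c, hc1, hc2⟩ := EReal.lt_iff_exists_real_btwn.1 hcon
  rw [EReal.coe_lt_coe_iff] at hc1
  have hev : ∀ᶠ y in 𝓝 p, (c : EReal) < (K y : EReal) := by
    have h1 : LowerSemicontinuous (fun y => (K y : EReal)) :=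
      (continuous_coe_ennreal_ereal.comp_lowerSemicontinuous hK
        (fun _ _ h => EReal.coe_ennreal_le_coe_ennreal_iff.2 h))
    exact h1 p _ hc2
  obtain ⟨r, hr, hrb⟩ := Metric.eventually_nhds_iff.1 hev
  obtain ⟨δ, hδ0, hδr, hδc⟩ : ∃ δ : ℝ, 0 < δ ∧ δ < r ∧ x + a + δ < c := by
    refine ⟨min (r/2) ((c - (x+a))/2), ?_, ?_, ?_⟩
    · have : 0 < c - (x + a) := by linarith
      positivity
    · exact (min_le_left _ _).trans_lt (by linarith)
    · have := min_le_right (r/2) ((c - (x+a))/2)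
      linarith
  obtain ⟨d, hd1, hd2⟩ : ∃ d : ℝ, -c < d ∧ d < -x - a - δ := exists_between (by linarith)
  have hF := hν.1 (Metric.closedBall p δ) Metric.isClosed_closedBall
  have hG := hμ.2 (Metric.ball p δ) Metric.isOpen_ball
  have hinf : (c : EReal) ≤ ⨅ y ∈ Metric.closedBall p δ, (K y : EReal) :=
    le_iInf₂ fun y hy => (hrb (lt_of_le_of_lt (Metric.mem_closedBall.1 hy) hδr)).le
  have hinf2 : (⨅ y ∈ Metric.ball p δ, (I y : EReal)) ≤ (x : EReal) :=
    (iInf₂_le p (Metric.mem_ball_self hδ0)).trans hx.le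
  have hF2 : limsup (fun n : ℕ => (((n : ℝ)⁻¹ : ℝ) : EReal) *
      ENNReal.log (ν n (Metric.closedBall p δ))) atTop < (d : EReal) := by
    refine (hF.trans (EReal.neg_le_neg_iff.2 hinf)).trans_lt ?_
    rw [← EReal.coe_neg]; exact_mod_cast hd1
  have hG2 : ((a + δ + d : ℝ) : EReal) < liminf (fun n : ℕ => (((n : ℝ)⁻¹ : ℝ) : EReal) *
      ENNReal.log (μ n (Metric.ball p δ))) atTop := by
    refine lt_of_lt_of_le ?_ ((EReal.neg_le_neg_iff.2 hinf2).trans hG)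
    rw [← EReal.coe_neg, EReal.coe_lt_coe_iff]; linarith
  obtain ⟨n, ⟨hn1, hn2⟩, hn3⟩ := (((eventually_lt_of_limsup_lt hF2).and
    (eventually_lt_of_lt_liminf hG2)).and (eventually_ge_atTop 1)).exists
  have hn0 : (0:ℝ) < n := by exact_mod_cast hn3
  have hinv : (0 : EReal) ≤ (((n : ℝ)⁻¹ : ℝ) : EReal) := by
    exact_mod_cast (inv_pos.2 hn0).le
  have hb : ENNReal.log (μ n (Metric.ball p δ)) ≤ ((n * (a + δ) : ℝ) : EReal) +
      ENNReal.log (ν n (Metric.closedBall p δ)) := by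
    have := ENNReal.log_monotone ((measure_mono Metric.ball_subset_closedBall).trans
      (h δ hδ0 n hn3))
    rw [ENNReal.log_mul_add, ENNReal.log_ofReal_of_pos (Real.exp_pos _), Real.log_exp] at this
    exact this
  have hb2 := mul_le_mul_of_nonneg_left hb hinv
  rw [EReal.left_distrib_of_nonneg_of_ne_top hinv (EReal.coe_ne_top _), ← EReal.coe_mul,
    inv_mul_cancel_left₀ hn0.ne'] at hb2
  have h3 := hn2.trans_le hb2
  rw [EReal.coe_add (a + δ) d] at h3
  exact absurd (h3.trans_le (add_le_add le_rfl hn1.le)) (lt_irrefl _)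

/-- Proposition 1 (fluctuation relation): under Assumption 3, the joint rate functions of
`(M_n, W_n)` under `P_n` and `Q_n` satisfy `J_P(m,w) = J_Q(m,w) + w` on their common domain. -/
theorem fluctuation_relation
    {D : ℕ} {Λ : ℕ → Type*} [∀ n, MeasurableSpace (Λ n)]
    (P Q : ∀ n, Measure (Λ n))
    [∀ n, IsProbabilityMeasure (P n)] [∀ n, IsProbabilityMeasure (Q n)]
    (habs : ∀ n, P n ≪ Q n ∧ Q n ≪ P n)
    (M : ∀ n, Λ n → (Fin D → ℝ)) (hM : ∀ n, Measurable (M n))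
    (J_P J_Q : (Fin D → ℝ) × ℝ → ℝ≥0∞)
    (hLDP_P : SatisfiesLDP (fun n => (P n).map (fun x => (M n x, action (P n) (Q n) n x))) J_P)
    (hLDP_Q : SatisfiesLDP (fun n => (Q n).map (fun x => (M n x, action (P n) (Q n) n x))) J_Q)
    (hJPgood : IsGoodRate J_P) (hJQgood : IsGoodRate J_Q)
    (hdom : {p | J_P p ≠ ⊤} = {p | J_Q p ≠ ⊤})
    (hne : {p | J_P p ≠ ⊤}.Nonempty)
    :
    ∀ p : (Fin D → ℝ) × ℝ, J_P p ≠ ⊤ →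
      (J_P p : EReal) = (J_Q p : EReal) + (p.2 : EReal) := by
  intro p hpP
  have hpQ : J_Q p ≠ ⊤ := by
    have : p ∈ {p | J_P p ≠ ⊤} := hpP
    rw [hdom] at this
    exact this
  have hmeas : ∀ n, Measurable (fun x => (M n x, action (P n) (Q n) n x)) := by
    intro n
    refine (hM n).prodMk ?_
    unfold action
    exact ((Measure.measurable_rnDeriv _ _).ennreal_toReal.log).const_mul _
  have key : ∀ δ : ℝ, 0 < δ → ∀ n : ℕ, 1 ≤ n → ∀ᵐ x ∂(Q n),
      x ∈ (fun x => (M n x, action (P n) (Q n) n x)) ⁻¹' (Metric.closedBall p δ) →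
      (P n).rnDeriv (Q n) x ≤ ENNReal.ofReal (Real.exp (n * (-p.2 + δ))) ∧
      1 ≤ ENNReal.ofReal (Real.exp (n * (p.2 + δ))) * (P n).rnDeriv (Q n) x := by
    intro δ hδ n hn
    filter_upwards [(habs n).2.ae_le (Measure.rnDeriv_pos (habs n).1),
      Measure.rnDeriv_lt_top (P n) (Q n)] with x h0 h1 hx
    have hn0 : (0:ℝ) < n := by exact_mod_cast hn
    have hL : 0 < ((P n).rnDeriv (Q n) x).toReal := ENNReal.toReal_pos h0.ne' h1.ne
    have hLe : (P n).rnDeriv (Q n) x =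
        ENNReal.ofReal (Real.exp (Real.log ((P n).rnDeriv (Q n) x).toReal)) := by
      rw [Real.exp_log hL, ENNReal.ofReal_toReal h1.ne]
    have hd : |action (P n) (Q n) n x - p.2| ≤ δ := by
      have := Metric.mem_closedBall.1 hx
      rw [Prod.dist_eq] at this
      exact (le_max_right _ _).trans this
    have hlog : Real.log ((P n).rnDeriv (Q n) x).toReal = - (n * action (P n) (Q n) n x) := by
      unfold action
      field_simp
    rw [hlog] at hLe
    rw [abs_le] at hd
    rw [hLe, ← ENNReal.ofReal_mul (Real.exp_pos _).le, ← Real.exp_add]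
    constructor
    · apply ENNReal.ofReal_le_ofReal
      apply Real.exp_le_exp.2
      nlinarith
    · rw [← ENNReal.ofReal_one]
      apply ENNReal.ofReal_le_ofReal
      apply Real.one_le_exp
      nlinarith
  have h1 := ldp_aux _ _ _ _ hLDP_P hLDP_Q hJQgood.1 p hpP (-p.2) (by
    intro δ hδ n hn
    have hS := (hmeas n) (Metric.isClosed_closedBall (x := p) (ε := δ)).measurableSet
    rw [Measure.map_apply (hmeas n) Metric.isClosed_closedBall.measurableSet,
      Measure.map_apply (hmeas n) Metric.isClosed_closedBall.measurableSet,
      ← Measure.setLIntegral_rnDeriv (habs n).1, ← setLIntegral_const]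
    refine setLIntegral_mono_ae' hS ?_
    filter_upwards [key δ hδ n hn] with x hx hxs using (hx hxs).1)
  have h2 := ldp_aux _ _ _ _ hLDP_Q hLDP_P hJPgood.1 p hpQ (p.2) (by
    intro δ hδ n hn
    have hS := (hmeas n) (Metric.isClosed_closedBall (x := p) (ε := δ)).measurableSet
    rw [Measure.map_apply (hmeas n) Metric.isClosed_closedBall.measurableSet,
      Measure.map_apply (hmeas n) Metric.isClosed_closedBall.measurableSet,
      ← Measure.setLIntegral_rnDeriv (habs n).1,
      ← lintegral_const_mul _ (Measure.measurable_rnDeriv _ _), ← setLIntegral_one]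
    refine setLIntegral_mono_ae' hS ?_
    filter_upwards [key δ hδ n hn] with x hx hxs using (hx hxs).2)
  refine le_antisymm h2 ?_
  rw [← EReal.coe_ennreal_toReal hpP, ← EReal.coe_ennreal_toReal hpQ, ← EReal.coe_add,
    EReal.coe_le_coe_iff] at h1
  rw [← EReal.coe_ennreal_toReal hpP, ← EReal.coe_ennreal_toReal hpQ, ← EReal.coe_add,
    EReal.coe_le_coe_iff]
  linarith
end

section
/- Under Assumptions 1, 2 and 3, the second-moment decay rate R_Q(B) = lim_{n→∞} −(1/n) log E_{Q_n}[L_n² 1_{M_n∈B}] exists, is finite, and is given by R_Q(B) = inf_{(m,w)∈B×ℝ} {w + J_P(m,w)} = inf_{(m,w)∈B×ℝ} {2w + J_Q(m,w)} (Lemma 1). -/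
open MeasureTheory Filter Set Topology
open scoped ENNReal NNReal

/-- `exp (n c)` in `ℝ≥0∞`. -/
noncomputable def Eexp (n : ℕ) (c : ℝ) : ℝ≥0∞ := ENNReal.ofReal (Real.exp (n * c))

lemma Eexp_mul (n : ℕ) (a b : ℝ) : Eexp n a * Eexp n b = Eexp n (a + b) := by
  unfold Eexp
  rw [← ENNReal.ofReal_mul (Real.exp_nonneg _), ← Real.exp_add]
  ring_nf

lemma Eexp_mono (n : ℕ) {a b : ℝ} (h : a ≤ b) : Eexp n a ≤ Eexp n b := by
  unfold Eexp
  apply ENNReal.ofReal_le_ofReal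
  apply Real.exp_le_exp.2
  gcongr

lemma Eexp_le {n : ℕ} (hn : 1 ≤ n) {a b : ℝ} (h : Eexp n a ≤ Eexp n b) : a ≤ b := by
  unfold Eexp at h
  rw [ENNReal.ofReal_le_ofReal_iff (Real.exp_nonneg _), Real.exp_le_exp] at h
  have : (0 : ℝ) < n := by exact_mod_cast hn
  exact le_of_mul_le_mul_left h this

lemma Eexp_pow (n : ℕ) (a : ℝ) : Eexp n a ^ 2 = Eexp n (2 * a) := by
  rw [pow_two, Eexp_mul]; ring_nf

lemma log_Eexp (n : ℕ) (c : ℝ) : ENNReal.log (Eexp n c) = ((n * c : ℝ) : EReal) := by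
  unfold Eexp
  rw [ENNReal.log_ofReal_of_pos (Real.exp_pos _), Real.log_exp]

lemma expRate_Eexp {n : ℕ} (hn : 1 ≤ n) (c : ℝ) : expRate n (Eexp n c) = (c : EReal) := by
  have h : (n : ℝ) ≠ 0 := by positivity
  rw [expRate, log_Eexp, ← EReal.coe_mul]
  congr 1
  field_simp

lemma expRate_mono (n : ℕ) {x y : ℝ≥0∞} (h : x ≤ y) : expRate n x ≤ expRate n y := by
  unfold expRate
  exact mul_le_mul_of_nonneg_left (ENNReal.log_monotone h)
    (by exact_mod_cast inv_nonneg.2 (Nat.cast_nonneg n))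

lemma le_Eexp {n : ℕ} (hn : 1 ≤ n) {x : ℝ≥0∞} {c : ℝ} (h : expRate n x < c) : x ≤ Eexp n c := by
  by_contra hx
  have := expRate_mono n (not_le.1 hx).le
  rw [expRate_Eexp hn] at this
  exact absurd h (not_lt.2 this)

lemma Eexp_le_of {n : ℕ} (hn : 1 ≤ n) {x : ℝ≥0∞} {c : ℝ} (h : (c : EReal) < expRate n x) :
    Eexp n c ≤ x := by
  by_contra hx
  have := expRate_mono n (not_le.1 hx).le
  rw [expRate_Eexp hn] at this
  exact absurd h (not_lt.2 this)

lemma ev_le_of_limsup {u : ℕ → ℝ≥0∞} {c : ℝ}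
    (h : limsup (fun n => expRate n (u n)) atTop < (c : EReal)) :
    ∀ᶠ n in atTop, u n ≤ Eexp n c := by
  filter_upwards [eventually_lt_of_limsup_lt h, eventually_ge_atTop 1] with n h1 h2
  exact le_Eexp h2 h1

lemma ev_ge_of_liminf {u : ℕ → ℝ≥0∞} {c : ℝ}
    (h : (c : EReal) < liminf (fun n => expRate n (u n)) atTop) :
    ∀ᶠ n in atTop, Eexp n c ≤ u n := by
  filter_upwards [eventually_lt_of_lt_liminf h, eventually_ge_atTop 1] with n h1 h2
  exact Eexp_le_of h2 h1

lemma ev_const_mul (N : ℕ) {c d : ℝ} (h : c < d) :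
    ∀ᶠ n : ℕ in atTop, (N : ℝ≥0∞) * Eexp n c ≤ Eexp n d := by
  have h1 : Tendsto (fun n : ℕ => Real.exp ((n : ℝ) * (d - c))) atTop atTop :=
    Real.tendsto_exp_atTop.comp
      (tendsto_natCast_atTop_atTop.atTop_mul_const (sub_pos.2 h))
  filter_upwards [h1.eventually_ge_atTop (N : ℝ)] with n hn
  have h2 : (N : ℝ≥0∞) ≤ Eexp n (d - c) := by
    unfold Eexp
    rw [← ENNReal.ofReal_natCast]
    exact ENNReal.ofReal_le_ofReal hn
  calc (N : ℝ≥0∞) * Eexp n c ≤ Eexp n (d - c) * Eexp n c := by gcongr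
    _ = Eexp n d := by rw [Eexp_mul]; ring_nf

lemma ldp_compare {X : Type*} [PseudoMetricSpace X] [MeasurableSpace X]
    {mu nu : ℕ → Measure X} {I J : X → ℝ≥0∞} (hmu : SatisfiesLDP mu I) (hnu : SatisfiesLDP nu J)
    (hJ : LowerSemicontinuous J) (p : X) (s : ℝ)
    (h : ∀ r > 0, ∀ᶠ n in atTop,
      Eexp n (s - r) * mu n (Metric.ball p r) ≤ nu n (Metric.closedBall p r)) :
    (s : EReal) + (J p : EReal) ≤ (I p : EReal) := by
  by_cases hI : I p = ⊤
  · simp [hI]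
  obtain ⟨i, hi⟩ : ∃ i : ℝ, (I p : EReal) = i :=
    ⟨(I p).toReal, (EReal.coe_ennreal_toReal hI).symm⟩
  by_contra hcon
  have hlt : ((i - s : ℝ) : EReal) < (J p : EReal) := by
    by_contra h'
    apply hcon
    calc (s : EReal) + (J p : EReal) ≤ s + ((i - s : ℝ) : EReal) := by
          gcongr; exact not_lt.1 h'
      _ = (I p : EReal) := by rw [hi, ← EReal.coe_add]; congr 1; ring
  obtain ⟨t, ht1, ht2⟩ := EReal.lt_iff_exists_real_btwn.1 hlt
  have ht1 : i - s < t := by exact_mod_cast ht1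
  have hlsc : LowerSemicontinuous (fun x => (J x : EReal)) :=
    continuous_coe_ennreal_ereal.comp_lowerSemicontinuous hJ
      (fun a b hab => EReal.coe_ennreal_le_coe_ennreal_iff.2 hab)
  obtain ⟨ρ, hρ, hρ'⟩ := Metric.eventually_nhds_iff_ball.1 (hlsc p t ht2)
  set η := (t - (i - s)) / 4 with hη
  have hη0 : 0 < η := by rw [hη]; linarith
  set r := min (ρ / 2) η
  have hr : 0 < r := lt_min (by linarith) hη0
  have hrη : r ≤ η := min_le_right _ _
  have hrρ : r ≤ ρ / 2 := min_le_left _ _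
  have hup := hnu.1 (Metric.closedBall p r) Metric.isClosed_closedBall
  have hlo := hmu.2 (Metric.ball p r) Metric.isOpen_ball
  have hup' : ∀ᶠ n in atTop, nu n (Metric.closedBall p r) ≤ Eexp n (-t + η) := by
    apply ev_le_of_limsup
    refine lt_of_le_of_lt hup ?_
    have : (t : EReal) ≤ ⨅ x ∈ Metric.closedBall p r, (J x : EReal) := by
      refine le_iInf₂ fun x hx => (hρ' x ?_).le
      exact Metric.closedBall_subset_ball (by linarith) hx
    refine lt_of_le_of_lt (EReal.neg_le_neg_iff.2 this) ?_
    rw [← EReal.coe_neg, EReal.coe_lt_coe_iff]; linarith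
  have hlo' : ∀ᶠ n in atTop, Eexp n (-i - η) ≤ mu n (Metric.ball p r) := by
    apply ev_ge_of_liminf
    refine lt_of_lt_of_le ?_ hlo
    have : ⨅ x ∈ Metric.ball p r, (I x : EReal) ≤ (i : EReal) := by
      rw [← hi]; exact iInf₂_le p (Metric.mem_ball_self hr)
    refine lt_of_lt_of_le ?_ (EReal.neg_le_neg_iff.2 this)
    rw [← EReal.coe_neg, EReal.coe_lt_coe_iff]; linarith
  obtain ⟨n, h1, h2, h3, h4⟩ := (hup'.and (hlo'.and ((h r hr).and (eventually_ge_atTop 1)))).exists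
  have : Eexp n (s - r + (-i - η)) ≤ Eexp n (-t + η) := by
    rw [← Eexp_mul]
    exact le_trans (by gcongr) (h3.trans h1)
  have := Eexp_le h4 this
  linarith

section meas
variable {Λ : Type*} [MeasurableSpace Λ]

lemma action_measurable (P Q : Measure Λ) (n : ℕ) : Measurable (action P Q n) := by
  unfold action
  exact (Real.measurable_log.comp (Measure.measurable_rnDeriv P Q).ennreal_toReal).const_mul _

lemma rnDeriv_eq (P Q : Measure Λ) [IsProbabilityMeasure P] [IsProbabilityMeasure Q]
    (hQP : Q ≪ P) {n : ℕ} (hn : 1 ≤ n) :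
    ∀ᵐ x ∂Q, P.rnDeriv Q x = Eexp n (-action P Q n x) := by
  filter_upwards [Measure.rnDeriv_pos' hQP, Measure.rnDeriv_lt_top P Q] with x h1 h2
  have h : (n : ℝ) ≠ 0 := by positivity
  unfold Eexp action
  have : (n : ℝ) * -(-(n : ℝ)⁻¹ * Real.log (P.rnDeriv Q x).toReal)
      = Real.log (P.rnDeriv Q x).toReal := by field_simp
  rw [this, Real.exp_log (ENNReal.toReal_pos h1.ne' h2.ne), ENNReal.ofReal_toReal h2.ne]

lemma const_mul_le_setLIntegral {Q : Measure Λ} {A : Set Λ} (hA : MeasurableSet A)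
    {f : Λ → ℝ≥0∞} {c : ℝ≥0∞} (h : ∀ᵐ x ∂Q, x ∈ A → c ≤ f x) :
    c * Q A ≤ ∫⁻ x in A, f x ∂Q := by
  rw [← setLIntegral_const]
  exact setLIntegral_mono_ae' hA h

lemma setLIntegral_le_const_mul {Q : Measure Λ} {A : Set Λ} (hA : MeasurableSet A)
    {f : Λ → ℝ≥0∞} {c : ℝ≥0∞} (h : ∀ᵐ x ∂Q, x ∈ A → f x ≤ c) :
    ∫⁻ x in A, f x ∂Q ≤ c * Q A := by
  rw [← setLIntegral_const]
  exact setLIntegral_mono_ae' hA h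

end meas

lemma tendsto_of_Eexp {u : ℕ → ℝ≥0∞} {R : ℝ}
    (h1 : ∀ c : ℝ, R < c → ∀ᶠ n in atTop, Eexp n (-c) ≤ u n)
    (h2 : ∀ c : ℝ, c < R → ∀ᶠ n in atTop, u n ≤ Eexp n (-c)) :
    Tendsto (fun n => -expRate n (u n)) atTop (𝓝 (R : EReal)) := by
  rw [tendsto_order]
  constructor
  · intro a ha
    obtain ⟨c, hc1, hc2⟩ := EReal.lt_iff_exists_real_btwn.1 ha
    filter_upwards [h2 c (by exact_mod_cast hc2), eventually_ge_atTop 1] with n hn hn1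
    have := expRate_mono n hn
    rw [expRate_Eexp hn1] at this
    refine lt_of_lt_of_le hc1 (EReal.le_neg_of_le_neg ?_)
    exact_mod_cast this
  · intro a ha
    obtain ⟨c, hc1, hc2⟩ := EReal.lt_iff_exists_real_btwn.1 ha
    filter_upwards [h1 c (by exact_mod_cast hc1), eventually_ge_atTop 1] with n hn hn1
    have := expRate_mono n hn
    rw [expRate_Eexp hn1] at this
    refine lt_of_le_of_lt (EReal.neg_le_of_neg_le ?_) hc2
    exact_mod_cast this
/-- Lemma 1: under Assumptions 1, 2 and 3, the second-moment decay rate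
`R_Q(B) = lim -(1/n) log E_Q[L_n² 1_(M_n ∈ B)]` exists, is finite, and is given by
`inf_(m ∈ B, w) (w + J_P(m,w)) = inf_(m ∈ B, w) (2w + J_Q(m,w))`. -/
theorem second_moment_rate
    {D : ℕ} {Λ : ℕ → Type*} [∀ n, MeasurableSpace (Λ n)]
    (P Q : ∀ n, Measure (Λ n))
    [∀ n, IsProbabilityMeasure (P n)] [∀ n, IsProbabilityMeasure (Q n)]
    (habs : ∀ n, P n ≪ Q n ∧ Q n ≪ P n)
    (M : ∀ n, Λ n → (Fin D → ℝ)) (hM : ∀ n, Measurable (M n))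
    (B : Set (Fin D → ℝ)) (hB : MeasurableSet B)
    (I_P : (Fin D → ℝ) → ℝ≥0∞)
    (hLDP_M : SatisfiesLDP (fun n => (P n).map (M n)) I_P)
    (hIPgood : IsGoodRate I_P)
    (hIPB : (⨅ m ∈ interior B, I_P m) = ⨅ m ∈ closure B, I_P m)
    (hIPBfin : (⨅ m ∈ closure B, I_P m) ≠ ⊤)
    (δ : ℝ) (hδ : 0 < δ)
    (hmom : limsup (fun n : ℕ => expRate n
        (∫⁻ x in {x | M n x ∈ closure B},
          ((P n).rnDeriv (Q n) x) ^ ((2 : ℝ) + δ) ∂(Q n))) atTop < ⊤)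
    (J_P J_Q : (Fin D → ℝ) × ℝ → ℝ≥0∞)
    (hLDP_P : SatisfiesLDP (fun n => (P n).map (fun x => (M n x, action (P n) (Q n) n x))) J_P)
    (hLDP_Q : SatisfiesLDP (fun n => (Q n).map (fun x => (M n x, action (P n) (Q n) n x))) J_Q)
    (hJPgood : IsGoodRate J_P) (hJQgood : IsGoodRate J_Q)
    (hdom : {p | J_P p ≠ ⊤} = {p | J_Q p ≠ ⊤})
    (hne : {p | J_P p ≠ ⊤}.Nonempty)
    (hBgood : (⨅ m ∈ interior B, ⨅ w : ℝ, (((2 * w : ℝ) : EReal) + (J_Q (m, w) : EReal)))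
      = ⨅ m ∈ closure B, ⨅ w : ℝ, (((2 * w : ℝ) : EReal) + (J_Q (m, w) : EReal)))
    :
    ∃ R : EReal,
      Tendsto (fun n : ℕ => -expRate n (∫⁻ x in {x | M n x ∈ B}, ((P n).rnDeriv (Q n) x) ^ 2 ∂(Q n))) atTop (𝓝 R) ∧
      R ≠ ⊤ ∧ R ≠ ⊥ ∧
      R = (⨅ m ∈ B, ⨅ w : ℝ, ((w : EReal) + (J_P (m, w) : EReal))) ∧
      R = ⨅ m ∈ B, ⨅ w : ℝ, (((2 * w : ℝ) : EReal) + (J_Q (m, w) : EReal)) := by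
  have hW : ∀ n, Measurable (action (P n) (Q n) n) := fun n => action_measurable _ _ n
  have hZ : ∀ n, Measurable (fun x => (M n x, action (P n) (Q n) n x)) :=
    fun n => (hM n).prodMk (hW n)
  have hL : ∀ n, 1 ≤ n → ∀ᵐ x ∂(Q n), (P n).rnDeriv (Q n) x = Eexp n (-action (P n) (Q n) n x) :=
    fun n hn => rnDeriv_eq _ _ (habs n).2 hn
  have hPA : ∀ n (A : Set (Λ n)), ∫⁻ x in A, (P n).rnDeriv (Q n) x ∂(Q n) = P n A :=
    fun n A => Measure.setLIntegral_rnDeriv (habs n).1 A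
  have hball : ∀ (p q : (Fin D → ℝ) × ℝ) (r : ℝ), q ∈ Metric.ball p r →
      q.1 ∈ Metric.ball p.1 r ∧ p.2 - r ≤ q.2 ∧ q.2 ≤ p.2 + r := by
    intro p q r hq
    rw [Metric.mem_ball, Prod.dist_eq, max_lt_iff, Real.dist_eq, abs_lt] at hq
    exact ⟨hq.1, by linarith [hq.2.1], by linarith [hq.2.2]⟩
  -- pointwise relation of the two rate functions
  have hrel1 : ∀ p : (Fin D → ℝ) × ℝ, ((-p.2 : ℝ) : EReal) + (J_P p : EReal) ≤ (J_Q p : EReal) := by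
    intro p
    refine ldp_compare hLDP_Q hLDP_P hJPgood.1 p (-p.2) ?_
    intro r hr
    filter_upwards [eventually_ge_atTop 1] with n hn
    refine le_trans ?_ (measure_mono Metric.ball_subset_closedBall)
    rw [Measure.map_apply (hZ n) Metric.isOpen_ball.measurableSet,
      Measure.map_apply (hZ n) Metric.isOpen_ball.measurableSet, ← hPA]
    refine const_mul_le_setLIntegral (hZ n Metric.isOpen_ball.measurableSet) ?_
    filter_upwards [hL n hn] with x hx hxA
    rw [hx]
    have := (hball _ _ _ hxA).2.2
    exact Eexp_mono n (by simp only at this; linarith)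
  have hrel2 : ∀ p : (Fin D → ℝ) × ℝ, ((p.2 : ℝ) : EReal) + (J_Q p : EReal) ≤ (J_P p : EReal) := by
    intro p
    refine ldp_compare hLDP_P hLDP_Q hJQgood.1 p p.2 ?_
    intro r hr
    filter_upwards [eventually_ge_atTop 1] with n hn
    refine le_trans ?_ (measure_mono Metric.ball_subset_closedBall)
    rw [Measure.map_apply (hZ n) Metric.isOpen_ball.measurableSet,
      Measure.map_apply (hZ n) Metric.isOpen_ball.measurableSet, ← hPA]
    have : ∫⁻ x in (fun x => (M n x, action (P n) (Q n) n x)) ⁻¹' Metric.ball p r,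
        (P n).rnDeriv (Q n) x ∂(Q n) ≤ Eexp n (-(p.2 - r)) *
          Q n ((fun x => (M n x, action (P n) (Q n) n x)) ⁻¹' Metric.ball p r) := by
      refine setLIntegral_le_const_mul (hZ n Metric.isOpen_ball.measurableSet) ?_
      filter_upwards [hL n hn] with x hx hxA
      rw [hx]
      have := (hball _ _ _ hxA).2.1
      exact Eexp_mono n (by simp only at this; linarith)
    refine (mul_le_mul_right this _).trans ?_
    rw [← mul_assoc, Eexp_mul]
    simp [Eexp]
  have hrel : ∀ (m : Fin D → ℝ) (w : ℝ), (w : EReal) + (J_P (m, w) : EReal)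
      = ((2 * w : ℝ) : EReal) + (J_Q (m, w) : EReal) := by
    intro m w
    have h1 := hrel1 (m, w)
    have h2 := hrel2 (m, w)
    simp only at h1 h2
    have e : ((2 * w : ℝ) : EReal) = (w : EReal) + (w : EReal) := by
      rw [← EReal.coe_add]; congr 1; ring
    apply le_antisymm
    · calc (w : EReal) + (J_P (m, w) : EReal)
          = ((2 * w : ℝ) : EReal) + (((-w : ℝ) : EReal) + (J_P (m, w) : EReal)) := by
            rw [← add_assoc, ← EReal.coe_add]; congr 2; ring
        _ ≤ _ := by gcongr
    · rw [e, add_assoc]; gcongr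
  -- notation
  set F : (Fin D → ℝ) → EReal := fun m => ⨅ w : ℝ, (((2 * w : ℝ) : EReal) + (J_Q (m, w) : EReal))
    with hF
  set u : ℕ → ℝ≥0∞ := fun n =>
    ∫⁻ x in {x | M n x ∈ B}, ((P n).rnDeriv (Q n) x) ^ 2 ∂(Q n) with hu
  -- lower bound
  have hlow : ∀ (m : Fin D → ℝ) (w : ℝ), m ∈ interior B → ∀ c : ℝ,
      (((2 * w : ℝ) : EReal) + (J_Q (m, w) : EReal)) < c → ∀ᶠ n in atTop, Eexp n (-c) ≤ u n := by
    intro m w hm c hc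
    have hI : J_Q (m, w) ≠ ⊤ := by
      intro h
      rw [h, EReal.coe_ennreal_top, EReal.coe_add_top] at hc
      exact not_top_lt hc
    obtain ⟨i, hi⟩ : ∃ i : ℝ, (J_Q (m, w) : EReal) = i :=
      ⟨(J_Q (m, w)).toReal, (EReal.coe_ennreal_toReal hI).symm⟩
    rw [hi, ← EReal.coe_add, EReal.coe_lt_coe_iff] at hc
    obtain ⟨ρ, hρ, hρB⟩ := Metric.isOpen_iff.1 isOpen_interior m hm
    set η := (c - (2 * w + i)) / 3 with hη
    have hη0 : 0 < η := by rw [hη]; linarith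
    set r := min ρ η
    have hr : 0 < r := lt_min hρ hη0
    have hrη : r ≤ η := min_le_right _ _
    have hrρ : r ≤ ρ := min_le_left _ _
    have hlo := hLDP_Q.2 (Metric.ball (m, w) r) Metric.isOpen_ball
    have hlo' := ev_ge_of_liminf (c := -i - η) (lt_of_lt_of_le (by
      have : ⨅ x ∈ Metric.ball (m, w) r, (J_Q x : EReal) ≤ (i : EReal) := by
        rw [← hi]; exact iInf₂_le (m, w) (Metric.mem_ball_self hr)
      refine lt_of_lt_of_le ?_ (EReal.neg_le_neg_iff.2 this)
      rw [← EReal.coe_neg, EReal.coe_lt_coe_iff]; linarith) hlo)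
    filter_upwards [hlo', eventually_ge_atTop 1] with n h1 hn
    rw [Measure.map_apply (hZ n) Metric.isOpen_ball.measurableSet] at h1
    set A := (fun x => (M n x, action (P n) (Q n) n x)) ⁻¹' Metric.ball (m, w) r with hA
    calc Eexp n (-c) ≤ Eexp n (2 * (-(w + r)) + (-i - η)) := Eexp_mono n (by linarith)
      _ = Eexp n (2 * (-(w + r))) * Eexp n (-i - η) := (Eexp_mul _ _ _).symm
      _ ≤ Eexp n (2 * (-(w + r))) * Q n A := by gcongr
      _ ≤ ∫⁻ x in A, ((P n).rnDeriv (Q n) x) ^ 2 ∂(Q n) := by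
        refine const_mul_le_setLIntegral (hZ n Metric.isOpen_ball.measurableSet) ?_
        filter_upwards [hL n hn] with x hx hxA
        rw [hx, Eexp_pow]
        have := (hball _ _ _ hxA).2.2
        exact Eexp_mono n (by simp only at this; linarith)
      _ ≤ u n := by
        refine lintegral_mono_set ?_
        intro x hx
        show M n x ∈ B
        exact interior_subset (hρB (Metric.ball_subset_ball hrρ (hball _ _ _ hx).1))
  -- the moment bound
  obtain ⟨C, hC1, -⟩ := EReal.lt_iff_exists_real_btwn.1 hmom
  have hC := ev_le_of_limsup hC1
  have hclm : ∀ n, MeasurableSet {x | M n x ∈ closure B} := fun n => hM n isClosed_closure.measurableSet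
  -- finiteness from above
  have htop : (⨅ m ∈ closure B, F m) ≠ ⊤ := by
    intro htop
    have hJQ : ∀ m ∈ closure B, ∀ w, J_Q (m, w) = ⊤ := by
      intro m hm w
      have h1 : F m = ⊤ := by
        have := iInf₂_le (f := fun m (_ : m ∈ closure B) => F m) m hm
        rw [htop] at this
        exact top_le_iff.1 this
      have h2 : F m ≤ ((2 * w : ℝ) : EReal) + (J_Q (m, w) : EReal) := iInf_le _ w
      rw [h1, top_le_iff] at h2
      by_contra h3
      rw [← EReal.coe_ennreal_toReal h3, ← EReal.coe_add] at h2
      exact EReal.coe_ne_top _ h2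
    have hJP : ∀ m ∈ closure B, ∀ w, J_P (m, w) = ⊤ := by
      intro m hm w
      by_contra h
      have : (m, w) ∈ {p | J_P p ≠ ⊤} := h
      rw [hdom] at this
      exact this (hJQ m hm w)
    obtain ⟨m, hm, hmt⟩ : ∃ m ∈ interior B, I_P m ≠ ⊤ := by
      by_contra hcon
      push Not at hcon
      apply hIPBfin
      rw [← hIPB]
      simp only [iInf_eq_top]
      exact hcon
    have hup := hLDP_P.1 (closure B ×ˢ univ) (isClosed_closure.prod isClosed_univ)
    have hlo := hLDP_M.2 (interior B) isOpen_interior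
    set i := (I_P m).toReal
    have hi : (I_P m : EReal) = (i : ℝ) := (EReal.coe_ennreal_toReal hmt).symm
    have hlo' := ev_ge_of_liminf (c := -i - 1) (lt_of_lt_of_le (by
      have : ⨅ x ∈ interior B, (I_P x : EReal) ≤ (i : EReal) := by
        rw [← hi]; exact iInf₂_le m hm
      refine lt_of_lt_of_le ?_ (EReal.neg_le_neg_iff.2 this)
      rw [← EReal.coe_neg, EReal.coe_lt_coe_iff]; linarith) hlo)
    have hup' := ev_le_of_limsup (c := -i - 2) (lt_of_le_of_lt hup (by
      have : (⨅ x ∈ closure B ×ˢ (univ : Set ℝ), (J_P x : EReal)) = ⊤ := by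
        simp only [iInf_eq_top]
        rintro ⟨m, w⟩ hx
        rw [hJP m hx.1 w]; rfl
      rw [this, EReal.neg_top]
      exact EReal.bot_lt_coe _))
    obtain ⟨n, h1, h2, hn⟩ := (hlo'.and (hup'.and (eventually_ge_atTop 1))).exists
    rw [Measure.map_apply (hM n) isOpen_interior.measurableSet] at h1
    rw [Measure.map_apply (hZ n) (isClosed_closure.prod isClosed_univ).measurableSet] at h2
    have h3 : P n (M n ⁻¹' interior B) ≤ P n ((fun x => (M n x, action (P n) (Q n) n x)) ⁻¹'
        (closure B ×ˢ univ)) := by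
      apply measure_mono
      intro x hx
      exact ⟨subset_closure (interior_subset hx), mem_univ _⟩
    have := Eexp_le hn (h1.trans (h3.trans h2))
    linarith
  -- finiteness from below
  have hbot : (⨅ m ∈ interior B, F m) ≠ ⊥ := by
    set C' := max C 0 with hC'
    have hev : ∀ᶠ n in atTop, u n ≤ Eexp n (C' + 1) := by
      filter_upwards [hC, ev_const_mul 2 (show C' < C' + 1 by linarith)] with n h1 h2
      refine le_trans ?_ h2
      calc u n ≤ ∫⁻ x in {x | M n x ∈ closure B}, ((P n).rnDeriv (Q n) x) ^ 2 ∂(Q n) :=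
            lintegral_mono_set (fun x hx => subset_closure hx)
        _ ≤ ∫⁻ x in {x | M n x ∈ closure B},
            (((P n).rnDeriv (Q n) x) ^ ((2 : ℝ) + δ) + 1) ∂(Q n) := by
            refine lintegral_mono fun x => ?_
            rcases le_total 1 ((P n).rnDeriv (Q n) x) with h | h
            · refine le_trans ?_ le_self_add
              rw [← ENNReal.rpow_two]
              exact ENNReal.rpow_le_rpow_of_exponent_le h (by linarith)
            · refine le_trans ?_ le_add_self
              exact pow_le_one₀ zero_le h
        _ = (∫⁻ x in {x | M n x ∈ closure B},
            ((P n).rnDeriv (Q n) x) ^ ((2 : ℝ) + δ) ∂(Q n)) + Q n {x | M n x ∈ closure B} := by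
            rw [lintegral_add_right _ measurable_const]; simp
        _ ≤ Eexp n C' + Eexp n C' := by
            refine add_le_add (h1.trans (Eexp_mono n (le_max_left _ _))) ?_
            refine prob_le_one.trans ?_
            have : Eexp n 0 = 1 := by simp [Eexp]
            rw [← this]
            exact Eexp_mono n (le_max_right _ _)
        _ = ((2 : ℕ) : ℝ≥0∞) * Eexp n C' := by push_cast; rw [two_mul]
    have : ((-(C' + 2) : ℝ) : EReal) ≤ ⨅ m ∈ interior B, F m := by
      refine le_iInf₂ fun m hm => le_iInf fun w => ?_
      by_contra hlt
      obtain ⟨n, h1, h2, hn⟩ := ((hlow m w hm _ (not_le.1 hlt)).and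
        (hev.and (eventually_ge_atTop 1))).exists
      have := Eexp_le hn (h1.trans h2)
      linarith
    intro h
    rw [h] at this
    exact EReal.coe_ne_bot _ (le_bot_iff.1 this)
  have hle1 : (⨅ m ∈ closure B, F m) ≤ ⨅ m ∈ B, F m :=
    biInf_mono fun m hm => subset_closure hm
  have hle2 : (⨅ m ∈ B, F m) ≤ ⨅ m ∈ interior B, F m :=
    biInf_mono fun m hm => interior_subset hm
  have hBint : (⨅ m ∈ B, F m) = ⨅ m ∈ interior B, F m :=
    le_antisymm hle2 (hBgood ▸ hle1)
  obtain ⟨R, hR⟩ : ∃ R : ℝ, (⨅ m ∈ closure B, F m) = (R : EReal) :=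
    ⟨(⨅ m ∈ closure B, F m).toReal, (EReal.coe_toReal htop (hBgood ▸ hbot)).symm⟩
  have hRF : ∀ m ∈ closure B, ∀ w : ℝ,
      (R : EReal) ≤ ((2 * w : ℝ) : EReal) + (J_Q (m, w) : EReal) := by
    intro m hm w
    rw [← hR]
    exact (iInf₂_le m hm).trans (iInf_le _ w)
  -- upper bound
  have hup : ∀ c : ℝ, c < R → ∀ᶠ n in atTop, u n ≤ Eexp n (-c) := by
    intro c hc
    set ε := (R - c) / 4 with hε
    have hε0 : 0 < ε := by rw [hε]; linarith
    set K := max ((C + R) / δ) (R / 2) with hK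
    have hK1 : C - δ * K ≤ -R := by
      have : (C + R) / δ ≤ K := le_max_left _ _
      rw [div_le_iff₀ hδ] at this
      linarith
    have hK2 : -2 * K ≤ -R := by
      have : R / 2 ≤ K := le_max_right _ _
      linarith
    obtain ⟨N, hN⟩ := exists_nat_gt (2 * K / ε)
    rw [div_lt_iff₀ hε0] at hN
    set a : ℕ → ℝ := fun i => -K + i * ε with ha
    -- slices
    have hsl : ∀ i : Fin N, ∀ᶠ n in atTop,
        ∫⁻ x in {x | M n x ∈ closure B ∧ action (P n) (Q n) n x ∈ Icc (a i) (a i + ε)},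
          ((P n).rnDeriv (Q n) x) ^ 2 ∂(Q n) ≤ Eexp n (-R + 3 * ε) := by
      intro i
      have hcl : IsClosed (closure B ×ˢ Icc (a i) (a i + ε)) := isClosed_closure.prod isClosed_Icc
      have h := hLDP_Q.1 _ hcl
      have h' := ev_le_of_limsup (c := -R + 2 * a i + 3 * ε) (lt_of_le_of_lt h (by
        have : ((R - 2 * (a i + ε) : ℝ) : EReal) ≤
            ⨅ x ∈ closure B ×ˢ Icc (a i) (a i + ε), (J_Q x : EReal) := by
          refine le_iInf₂ ?_
          rintro ⟨m, w⟩ ⟨hm, hw⟩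
          have h1 := hRF m hm w
          simp only [mem_Icc] at hw
          by_cases hI : J_Q (m, w) = ⊤
          · rw [hI]; exact le_top
          rw [← EReal.coe_ennreal_toReal hI, ← EReal.coe_add, EReal.coe_le_coe_iff] at h1
          rw [← EReal.coe_ennreal_toReal hI, EReal.coe_le_coe_iff]
          linarith [hw.2]
        refine lt_of_le_of_lt (EReal.neg_le_neg_iff.2 this) ?_
        rw [← EReal.coe_neg, EReal.coe_lt_coe_iff]; linarith))
      filter_upwards [h', eventually_ge_atTop 1] with n h1 hn
      rw [Measure.map_apply (hZ n) hcl.measurableSet] at h1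
      set A := (fun x => (M n x, action (P n) (Q n) n x)) ⁻¹'
        (closure B ×ˢ Icc (a i) (a i + ε)) with hA
      calc _ ≤ Eexp n (-2 * a i) * Q n A := by
            refine setLIntegral_le_const_mul (hZ n hcl.measurableSet) ?_
            filter_upwards [hL n hn] with x hx hxA
            rw [hx, Eexp_pow]
            have : a i ≤ action (P n) (Q n) n x := hxA.2.1
            exact Eexp_mono n (by linarith)
        _ ≤ Eexp n (-2 * a i) * Eexp n (-R + 2 * a i + 3 * ε) := by gcongr
        _ = Eexp n (-R + 3 * ε) := by rw [Eexp_mul]; ring_nf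
    have hsl' := eventually_all.2 hsl
    filter_upwards [hsl', hC, eventually_ge_atTop 1,
      ev_const_mul (N + 2) (show -R + 3 * ε < -c by linarith)] with n h1 h2 hn h3
    refine le_trans ?_ h3
    set T := {x | M n x ∈ closure B ∧ action (P n) (Q n) n x ≤ -K} with hT
    set U := {x | K ≤ action (P n) (Q n) n x} with hU
    set S : Fin N → Set (Λ n) :=
      fun i => {x | M n x ∈ closure B ∧ action (P n) (Q n) n x ∈ Icc (a i) (a i + ε)} with hS
    have hTm : MeasurableSet T := (hclm n).inter (hW n measurableSet_Iic)
    have hUm : MeasurableSet U := hW n measurableSet_Ici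
    have hsub : {x | M n x ∈ B} ⊆ (T ∪ U) ∪ ⋃ i, S i := by
      intro x hx
      have hx' : M n x ∈ closure B := subset_closure hx
      by_cases hT' : action (P n) (Q n) n x ≤ -K
      · exact Or.inl (Or.inl ⟨hx', hT'⟩)
      by_cases hU' : K ≤ action (P n) (Q n) n x
      · exact Or.inl (Or.inr hU')
      push Not at hT' hU'
      right
      set y := action (P n) (Q n) n x with hy
      have hpos : 0 ≤ (y + K) / ε := by
        apply div_nonneg _ hε0.le
        linarith
      have f1 := Nat.floor_le hpos
      have f2 := Nat.lt_floor_add_one ((y + K) / ε)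
      rw [le_div_iff₀ hε0] at f1
      rw [div_lt_iff₀ hε0] at f2
      have f3 : ⌊(y + K) / ε⌋₊ < N := by
        rw [Nat.floor_lt hpos, div_lt_iff₀ hε0]
        linarith
      refine mem_iUnion.2 ⟨⟨_, f3⟩, hx', ?_, ?_⟩
      · simp only [ha]; linarith
      · simp only [ha]; linarith
    have hTb : ∫⁻ x in T, ((P n).rnDeriv (Q n) x) ^ 2 ∂(Q n) ≤ Eexp n (-R + 3 * ε) := by
      calc _ ≤ ∫⁻ x in T, Eexp n (-δ * K) * ((P n).rnDeriv (Q n) x) ^ ((2 : ℝ) + δ) ∂(Q n) := by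
            refine setLIntegral_mono_ae' hTm ?_
            filter_upwards [hL n hn] with x hx hxA
            have e1 : ∀ b : ℝ, Eexp n b ^ ((2 : ℝ) + δ) = Eexp n ((2 + δ) * b) := by
              intro b
              unfold Eexp
              rw [ENNReal.ofReal_rpow_of_pos (Real.exp_pos _), ← Real.exp_mul]
              ring_nf
            rw [hx, Eexp_pow, e1, Eexp_mul]
            have : action (P n) (Q n) n x ≤ -K := hxA.2
            exact Eexp_mono n (by nlinarith)
        _ = Eexp n (-δ * K) * ∫⁻ x in T, ((P n).rnDeriv (Q n) x) ^ ((2 : ℝ) + δ) ∂(Q n) :=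
            lintegral_const_mul _ ((Measure.measurable_rnDeriv _ _).pow_const _)
        _ ≤ Eexp n (-δ * K) * Eexp n C := by
            gcongr
            exact le_trans (lintegral_mono_set fun x hx => hx.1) h2
        _ = Eexp n (-δ * K + C) := Eexp_mul _ _ _
        _ ≤ _ := Eexp_mono n (by linarith)
    have hUb : ∫⁻ x in U, ((P n).rnDeriv (Q n) x) ^ 2 ∂(Q n) ≤ Eexp n (-R + 3 * ε) := by
      calc _ ≤ Eexp n (-2 * K) * Q n U := by
            refine setLIntegral_le_const_mul hUm ?_
            filter_upwards [hL n hn] with x hx hxA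
            rw [hx, Eexp_pow]
            have : K ≤ action (P n) (Q n) n x := hxA
            exact Eexp_mono n (by linarith)
        _ ≤ Eexp n (-2 * K) * 1 := by gcongr; exact prob_le_one
        _ = Eexp n (-2 * K) := mul_one _
        _ ≤ _ := Eexp_mono n (by linarith)
    calc u n ≤ ∫⁻ x in (T ∪ U) ∪ ⋃ i, S i, ((P n).rnDeriv (Q n) x) ^ 2 ∂(Q n) :=
          lintegral_mono_set hsub
      _ ≤ (∫⁻ x in T, ((P n).rnDeriv (Q n) x) ^ 2 ∂(Q n)
          + ∫⁻ x in U, ((P n).rnDeriv (Q n) x) ^ 2 ∂(Q n))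
          + ∑' i, ∫⁻ x in S i, ((P n).rnDeriv (Q n) x) ^ 2 ∂(Q n) :=
          (lintegral_union_le _ _ _).trans
            (add_le_add (lintegral_union_le _ _ _) (lintegral_iUnion_le _ _))
      _ ≤ (Eexp n (-R + 3 * ε) + Eexp n (-R + 3 * ε)) + ∑ _i : Fin N, Eexp n (-R + 3 * ε) := by
          rw [tsum_fintype]
          exact add_le_add (add_le_add hTb hUb) (Finset.sum_le_sum fun i _ => h1 i)
      _ = ((N + 2 : ℕ) : ℝ≥0∞) * Eexp n (-R + 3 * ε) := by
          simp only [Finset.sum_const, Finset.card_univ, Fintype.card_fin, nsmul_eq_mul]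
          push_cast
          ring
  have hBR : (⨅ m ∈ B, F m) = (R : EReal) := by rw [hBint, hBgood, hR]
  refine ⟨(R : EReal), tendsto_of_Eexp ?_ hup, EReal.coe_ne_top _, EReal.coe_ne_bot _, ?_, hBR.symm⟩
  · intro c hc
    have : (⨅ m ∈ interior B, F m) < (c : EReal) := by
      rw [hBgood, hR]; exact_mod_cast hc
    simp only [hF, iInf_lt_iff] at this
    obtain ⟨m, hm, w, hw⟩ := this
    exact hlow m w hm c hw
  · rw [← hBR]
    simp only [hF, hrel]
end

section
/- Under Assumptions 1 and 3, the rare-event exponent admits the variational representations I_P(B) = inf_{(m,w)∈B×ℝ} J_P(m,w) = inf_{(m,w)∈B×ℝ} {w + J_Q(m,w)}. -/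
open MeasureTheory Filter Set Topology
open scoped ENNReal NNReal

lemma ldp_compare_s5 {X Y : Type*} [TopologicalSpace X] [MeasurableSpace X]
    [TopologicalSpace Y] [MeasurableSpace Y]
    {mu : ℕ → Measure X} {nu : ℕ → Measure Y} {I : X → ℝ≥0∞} {J : Y → ℝ≥0∞}
    (hI : SatisfiesLDP mu I) (hJ : SatisfiesLDP nu J) {G : Set X} {F : Set Y}
    (hG : IsOpen G) (hF : IsClosed F) (c : ℝ)
    (h : ∀ᶠ n in atTop, mu n G ≤ ENNReal.ofReal (Real.exp ((n : ℝ) * c)) * nu n F) :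
    (⨅ y ∈ F, (J y : EReal)) ≤ (⨅ x ∈ G, (I x : EReal)) + (c : EReal) := by
  have h1 := hI.2 G hG
  have h2 := hJ.1 F hF
  set a := (⨅ x ∈ G, (I x : EReal))
  set b := (⨅ y ∈ F, (J y : EReal))
  have h3 : liminf (fun n : ℕ => (((n : ℝ)⁻¹ : ℝ) : EReal) * ENNReal.log (mu n G)) atTop ≤
      limsup ((fun _ : ℕ => (c : EReal)) +
        (fun n : ℕ => (((n : ℝ)⁻¹ : ℝ) : EReal) * ENNReal.log (nu n F))) atTop := by
    refine (liminf_le_limsup).trans (limsup_le_limsup ?_)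
    filter_upwards [h, eventually_gt_atTop 0] with n hn hn0
    have hn0' : (n : ℝ) ≠ 0 := by positivity
    have hnn : (0 : EReal) ≤ (((n : ℝ)⁻¹ : ℝ) : EReal) := by
      exact_mod_cast (by positivity : (0 : ℝ) ≤ (n : ℝ)⁻¹)
    refine (mul_le_mul_of_nonneg_left (ENNReal.log_monotone hn) hnn).trans ?_
    rw [ENNReal.log_mul_add, ENNReal.log_ofReal_of_pos (Real.exp_pos _), Real.log_exp,
      EReal.left_distrib_of_nonneg_of_ne_top hnn (EReal.coe_ne_top _), ← EReal.coe_mul,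
      inv_mul_cancel_left₀ hn0']
    rfl
  have h4 := h3.trans (EReal.limsup_add_le (by simp) (by simp))
  rw [limsup_const] at h4
  have h5 : -a ≤ (c : EReal) + -b := (h1.trans h4).trans (by gcongr)
  have h6 : -(c + -b) ≤ a := by
    rw [← EReal.neg_le_neg_iff, neg_neg]; exact h5
  rw [EReal.neg_add (by simp) (by simp), sub_eq_add_neg, neg_neg] at h6
  calc b = (-(c : EReal) + b) + c := by
        rw [add_comm, ← add_assoc, ← sub_eq_add_neg]
        rw [EReal.sub_self (by simp) (by simp), zero_add]
    _ ≤ a + c := by gcongr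

lemma ldp_point {X Y : Type*} [TopologicalSpace X] [MeasurableSpace X]
    [TopologicalSpace Y] [MeasurableSpace Y]
    {mu : ℕ → Measure X} {nu : ℕ → Measure Y} {I : X → ℝ≥0∞} {J : Y → ℝ≥0∞}
    (hI : SatisfiesLDP mu I) (hJ : SatisfiesLDP nu J) (hl : LowerSemicontinuous J)
    (p : X) (q : Y) (c : ℝ)
    (h : ∀ ε > 0, ∀ U ∈ 𝓝 q, ∃ G F, IsOpen G ∧ p ∈ G ∧ IsClosed F ∧ F ⊆ U ∧
      ∀ᶠ n in atTop, mu n G ≤ ENNReal.ofReal (Real.exp ((n : ℝ) * (c + ε))) * nu n F) :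
    (J q : EReal) ≤ (I p : EReal) + (c : EReal) := by
  by_contra! hcon
  obtain ⟨r, hr1, hr2⟩ := EReal.lt_iff_exists_real_btwn.1 hcon
  by_cases hIp : I p = ⊤
  · rw [hIp] at hr1
    simp at hr1
  obtain ⟨i, hi⟩ : ∃ i : ℝ, (I p : EReal) = i := by
    lift I p to ℝ≥0 using hIp with i
    exact ⟨i, rfl⟩
  rw [hi, ← EReal.coe_add, EReal.coe_lt_coe_iff] at hr1
  have hl' : LowerSemicontinuous (fun y => (J y : EReal)) :=
    continuous_coe_ennreal_ereal.comp_lowerSemicontinuous hl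
      EReal.coe_ennreal_strictMono.monotone
  obtain ⟨G, F, hG, hp, hF, hFU, hev⟩ := h ((r - (i + c)) / 2) (by linarith) _ (hl' q r hr2)
  have := ldp_compare_s5 hI hJ hG hF _ hev
  have h1 : (r : EReal) ≤ ⨅ y ∈ F, (J y : EReal) := le_iInf₂ fun y hy => (hFU hy).le
  have h2 : (⨅ x ∈ G, (I x : EReal)) ≤ i := (iInf₂_le p hp).trans hi.le
  have h3 := h1.trans (this.trans (add_le_add_left h2 _))
  rw [← EReal.coe_add, EReal.coe_le_coe_iff] at h3
  linarith

lemma rnDeriv_eq_exp_action {Λ : Type*} [MeasurableSpace Λ] (P Q : Measure Λ)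
    [IsProbabilityMeasure P] [IsProbabilityMeasure Q] (h1 : P ≪ Q) (h2 : Q ≪ P)
    (n : ℕ) (hn : 0 < n) :
    ∀ᵐ x ∂Q, P.rnDeriv Q x = ENNReal.ofReal (Real.exp (-(n : ℝ) * action P Q n x)) := by
  filter_upwards [P.rnDeriv_lt_top Q, h2.ae_le (Measure.rnDeriv_pos h1)] with x hx hx'
  have hn' : (n : ℝ) ≠ 0 := by positivity
  have : -(n : ℝ) * action P Q n x = Real.log (P.rnDeriv Q x).toReal := by
    unfold action; field_simp
  rw [this, Real.exp_log (ENNReal.toReal_pos hx'.ne' hx.ne), ENNReal.ofReal_toReal hx.ne]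

lemma measurable_action {Λ : Type*} [MeasurableSpace Λ] (P Q : Measure Λ) (n : ℕ) :
    Measurable (action P Q n) := by
  unfold action
  exact (Real.measurable_log.comp (Measure.measurable_rnDeriv P Q).ennreal_toReal).const_mul _

lemma tilt_le {Λ : Type*} [MeasurableSpace Λ] (P Q : Measure Λ)
    [IsProbabilityMeasure P] [IsProbabilityMeasure Q] (h1 : P ≪ Q) (h2 : Q ≪ P)
    (n : ℕ) (hn : 0 < n) (S : Set Λ) (hS : MeasurableSet S) (a : ℝ)
    (ha : ∀ x ∈ S, -a ≤ action P Q n x) :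
    P S ≤ ENNReal.ofReal (Real.exp ((n : ℝ) * a)) * Q S := by
  rw [← Measure.setLIntegral_rnDeriv' h1 hS, ← setLIntegral_const]
  refine lintegral_mono_ae ?_
  filter_upwards [ae_restrict_of_ae (rnDeriv_eq_exp_action P Q h1 h2 n hn),
    ae_restrict_mem hS] with x hx hxS
  rw [hx]
  refine ENNReal.ofReal_le_ofReal (Real.exp_le_exp.2 ?_)
  nlinarith [mul_le_mul_of_nonneg_left (ha x hxS) (Nat.cast_nonneg (α := ℝ) n)]

lemma tilt_ge {Λ : Type*} [MeasurableSpace Λ] (P Q : Measure Λ)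
    [IsProbabilityMeasure P] [IsProbabilityMeasure Q] (h1 : P ≪ Q) (h2 : Q ≪ P)
    (n : ℕ) (hn : 0 < n) (S : Set Λ) (hS : MeasurableSet S) (a : ℝ)
    (ha : ∀ x ∈ S, action P Q n x ≤ a) :
    Q S ≤ ENNReal.ofReal (Real.exp ((n : ℝ) * a)) * P S := by
  rw [← Measure.setLIntegral_rnDeriv' h1 hS,
    ← lintegral_const_mul _ (Measure.measurable_rnDeriv P Q), ← setLIntegral_one]
  refine lintegral_mono_ae ?_
  filter_upwards [ae_restrict_of_ae (rnDeriv_eq_exp_action P Q h1 h2 n hn),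
    ae_restrict_mem hS] with x hx hxS
  rw [hx, ← ENNReal.ofReal_mul (Real.exp_pos _).le, ← Real.exp_add, ENNReal.one_le_ofReal,
    Real.one_le_exp_iff]
  nlinarith [mul_le_mul_of_nonneg_left (ha x hxS) (Nat.cast_nonneg (α := ℝ) n)]

/-- Under Assumptions 1 and 3, the rare-event exponent admits the variational representations
`I_P(B) = inf_(m ∈ B, w) J_P(m,w) = inf_(m ∈ B, w) (w + J_Q(m,w))`. -/
theorem rare_event_variational_representation
    {D : ℕ} {Λ : ℕ → Type*} [∀ n, MeasurableSpace (Λ n)]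
    (P Q : ∀ n, Measure (Λ n))
    [∀ n, IsProbabilityMeasure (P n)] [∀ n, IsProbabilityMeasure (Q n)]
    (habs : ∀ n, P n ≪ Q n ∧ Q n ≪ P n)
    (M : ∀ n, Λ n → (Fin D → ℝ)) (hM : ∀ n, Measurable (M n))
    (B : Set (Fin D → ℝ)) (hB : MeasurableSet B)
    (I_P : (Fin D → ℝ) → ℝ≥0∞)
    (hLDP_M : SatisfiesLDP (fun n => (P n).map (M n)) I_P)
    (hIPgood : IsGoodRate I_P)
    (hIPB : (⨅ m ∈ interior B, I_P m) = ⨅ m ∈ closure B, I_P m)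
    (hIPBfin : (⨅ m ∈ closure B, I_P m) ≠ ⊤)
    (J_P J_Q : (Fin D → ℝ) × ℝ → ℝ≥0∞)
    (hLDP_P : SatisfiesLDP (fun n => (P n).map (fun x => (M n x, action (P n) (Q n) n x))) J_P)
    (hLDP_Q : SatisfiesLDP (fun n => (Q n).map (fun x => (M n x, action (P n) (Q n) n x))) J_Q)
    (hJPgood : IsGoodRate J_P) (hJQgood : IsGoodRate J_Q)
    (hdom : {p | J_P p ≠ ⊤} = {p | J_Q p ≠ ⊤})
    (hne : {p | J_P p ≠ ⊤}.Nonempty)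
    :
    ((⨅ m ∈ closure B, I_P m : ℝ≥0∞) : EReal)
        = (⨅ m ∈ B, ⨅ w : ℝ, (J_P (m, w) : EReal)) ∧
    ((⨅ m ∈ closure B, I_P m : ℝ≥0∞) : EReal)
        = ⨅ m ∈ B, ⨅ w : ℝ, ((w : EReal) + (J_Q (m, w) : EReal)) := by
  have hpair : ∀ n, Measurable (fun x => (M n x, action (P n) (Q n) n x)) := fun n =>
    (hM n).prodMk (measurable_action _ _ _)
  -- the first contraction inequality
  have hA : ∀ m w, I_P m ≤ J_P (m, w) := by
    intro m w
    have := ldp_point hLDP_P hLDP_M hIPgood.1 (m, w) m 0 (by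
      intro ε hε U hU
      obtain ⟨r, hr, hrU⟩ := Metric.nhds_basis_closedBall.mem_iff.1 hU
      refine ⟨Metric.ball m r ×ˢ univ, Metric.closedBall m r,
        Metric.isOpen_ball.prod isOpen_univ, ⟨Metric.mem_ball_self hr, trivial⟩,
        Metric.isClosed_closedBall, hrU, Eventually.of_forall fun n => ?_⟩
      rw [Measure.map_apply (hpair n) (Metric.isOpen_ball.prod isOpen_univ).measurableSet,
        Measure.map_apply (hM n) Metric.isClosed_closedBall.measurableSet]
      refine le_trans (measure_mono ?_) (le_mul_of_one_le_left' ?_)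
      · intro x hx
        exact Metric.ball_subset_closedBall hx.1
      · rw [ENNReal.one_le_ofReal, Real.one_le_exp_iff]
        positivity)
    simpa using this
  -- the second contraction inequality
  have hB' : ∀ m ∈ interior B, (⨅ m ∈ B, ⨅ w : ℝ, (J_P (m, w) : EReal)) ≤ I_P m := by
    intro m hm
    obtain ⟨r, hr, hrU⟩ := Metric.nhds_basis_closedBall.mem_iff.1 (mem_interior_iff_mem_nhds.1 hm)
    have hcl : IsClosed (Metric.closedBall m r ×ˢ (univ : Set ℝ)) :=
      Metric.isClosed_closedBall.prod isClosed_univ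
    have := ldp_compare_s5 hLDP_M hLDP_P (G := Metric.ball m r) Metric.isOpen_ball hcl 0
      (Eventually.of_forall fun n => by
        rw [Measure.map_apply (hpair n) hcl.measurableSet,
          Measure.map_apply (hM n) Metric.isOpen_ball.measurableSet]
        simp only [mul_zero, Real.exp_zero, ENNReal.ofReal_one, one_mul]
        refine measure_mono ?_
        intro x hx
        exact ⟨Metric.ball_subset_closedBall hx, trivial⟩)
    rw [EReal.coe_zero, add_zero] at this
    refine le_trans ?_ (this.trans (iInf₂_le m (Metric.mem_ball_self hr)))
    refine le_iInf₂ fun y hy => ?_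
    exact (iInf₂_le y.1 (hrU hy.1)).trans (iInf_le _ y.2)
  have hnbhd : ∀ (p : (Fin D → ℝ) × ℝ), ∀ ε > 0, ∀ U ∈ 𝓝 p,
      ∃ r > 0, r ≤ ε ∧ Metric.closedBall p r ⊆ U := by
    intro p ε hε U hU
    obtain ⟨r, hr, hrU⟩ := Metric.nhds_basis_closedBall.mem_iff.1 hU
    exact ⟨min r ε, lt_min hr hε, min_le_right _ _,
      (Metric.closedBall_subset_closedBall (min_le_left _ _)).trans hrU⟩
  have hstrip : ∀ (p y : (Fin D → ℝ) × ℝ) (r : ℝ), y ∈ Metric.closedBall p r →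
      |y.2 - p.2| ≤ r := by
    intro p y r hy
    rw [← Real.dist_eq]
    exact (le_max_right _ _).trans hy
  have hP : ∀ m (w : ℝ), (J_P (m, w) : EReal) ≤ (J_Q (m, w) : EReal) + (w : EReal) := by
    intro m w
    refine ldp_point hLDP_Q hLDP_P hJPgood.1 (m, w) (m, w) w ?_
    intro ε hε U hU
    obtain ⟨r, hr, hrε, hrU⟩ := hnbhd _ ε hε U hU
    refine ⟨Metric.ball (m, w) r, Metric.closedBall (m, w) r, Metric.isOpen_ball,
      Metric.mem_ball_self hr, Metric.isClosed_closedBall, hrU, ?_⟩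
    filter_upwards [eventually_gt_atTop 0] with n hn
    refine (measure_mono Metric.ball_subset_closedBall).trans ?_
    have hms : MeasurableSet (Metric.closedBall (m, w) r) :=
      Metric.isClosed_closedBall.measurableSet
    rw [Measure.map_apply (hpair n) hms, Measure.map_apply (hpair n) hms]
    refine tilt_ge _ _ (habs n).1 (habs n).2 n hn _ (hpair n hms) _ fun x hx => ?_
    have := (abs_le.1 (hstrip _ _ _ hx)).2
    simp only at this
    linarith
  have hQ : ∀ m (w : ℝ), (J_Q (m, w) : EReal) ≤ (J_P (m, w) : EReal) + ((-w : ℝ) : EReal) := by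
    intro m w
    refine ldp_point hLDP_P hLDP_Q hJQgood.1 (m, w) (m, w) (-w) ?_
    intro ε hε U hU
    obtain ⟨r, hr, hrε, hrU⟩ := hnbhd _ ε hε U hU
    refine ⟨Metric.ball (m, w) r, Metric.closedBall (m, w) r, Metric.isOpen_ball,
      Metric.mem_ball_self hr, Metric.isClosed_closedBall, hrU, ?_⟩
    filter_upwards [eventually_gt_atTop 0] with n hn
    refine (measure_mono Metric.ball_subset_closedBall).trans ?_
    have hms : MeasurableSet (Metric.closedBall (m, w) r) :=
      Metric.isClosed_closedBall.measurableSet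
    rw [Measure.map_apply (hpair n) hms, Measure.map_apply (hpair n) hms]
    refine tilt_le _ _ (habs n).1 (habs n).2 n hn _ (hpair n hms) _ fun x hx => ?_
    have := (abs_le.1 (hstrip _ _ _ hx)).1
    simp only at this
    linarith
  have hPQ : ∀ m (w : ℝ), (w : EReal) + (J_Q (m, w) : EReal) = (J_P (m, w) : EReal) := by
    intro m w
    refine le_antisymm ?_ ((hP m w).trans_eq (add_comm _ _))
    refine (add_le_add_right (hQ m w) (w : EReal)).trans_eq ?_
    rw [add_comm, add_assoc, ← EReal.coe_add, neg_add_cancel, EReal.coe_zero, add_zero]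
  have main : ((⨅ m ∈ closure B, I_P m : ℝ≥0∞) : EReal)
        = (⨅ m ∈ B, ⨅ w : ℝ, (J_P (m, w) : EReal)) := by
    apply le_antisymm
    · refine le_iInf₂ fun m hm => le_iInf fun w => ?_
      exact EReal.coe_ennreal_le_coe_ennreal_iff.2
        ((iInf₂_le m (subset_closure hm)).trans (hA m w))
    · have h0 : (0 : EReal) ≤ ⨅ m ∈ B, ⨅ w : ℝ, (J_P (m, w) : EReal) :=
        le_iInf₂ fun m hm => le_iInf fun w => EReal.coe_ennreal_nonneg _
      rw [← EReal.coe_toENNReal h0, EReal.coe_ennreal_le_coe_ennreal_iff, ← hIPB]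
      refine le_iInf₂ fun m hm => ?_
      rw [← EReal.coe_ennreal_le_coe_ennreal_iff, EReal.coe_toENNReal h0]
      exact hB' m hm
  refine ⟨main, ?_⟩
  simp only [hPQ]
  exact main
end

section
/- Under Assumptions 1, 2 and 3, the sequence Q_n is asymptotically efficient (R_Q(B) exists and equals 2 I_P(B)) if and only if inf_{(m,w)∈B×ℝ} {2w + J_Q(m,w)} = 2 inf_{(m,w)∈B×ℝ} {w + J_Q(m,w)}. -/
open MeasureTheory Filter Set Topology
open scoped ENNReal NNReal

open ExpGrowth in
lemma ec_sup_eq (u : ℕ → ℝ≥0∞) : limsup (fun n => expRate n (u n)) atTop = expGrowthSup u := by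
  unfold expGrowthSup expRate
  congr 1; ext n
  rw [EReal.div_eq_inv_mul]; congr 1

open ExpGrowth in
lemma ec_inf_eq (u : ℕ → ℝ≥0∞) : liminf (fun n => expRate n (u n)) atTop = expGrowthInf u := by
  unfold expGrowthInf expRate
  congr 1; ext n
  rw [EReal.div_eq_inv_mul]; congr 1

noncomputable def ecEx (r : ℝ) (n : ℕ) : ℝ≥0∞ := ENNReal.ofReal (Real.exp (r * n))

lemma ecEx_eq (r : ℝ) : ecEx r = fun n : ℕ => EReal.exp ((r : EReal) * (n : EReal)) := by
  ext n
  rw [ecEx, ← EReal.exp_coe]; congr 1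

open ExpGrowth in
lemma ecEx_sup (r : ℝ) : expGrowthSup (ecEx r) = r := by
  rw [ecEx_eq, expGrowthSup_exp]

open ExpGrowth in
lemma ecEx_inf (r : ℝ) : expGrowthInf (ecEx r) = r := by
  rw [ecEx_eq, expGrowthInf_exp]

lemma ecEx_mono (n : ℕ) {r s : ℝ} (h : r ≤ s) : ecEx r n ≤ ecEx s n := by
  unfold ecEx; gcongr

lemma ecEx_mul (r s : ℝ) (n : ℕ) : ecEx r n * ecEx s n = ecEx (r + s) n := by
  unfold ecEx
  rw [← ENNReal.ofReal_mul (Real.exp_pos _).le, ← Real.exp_add]; ring_nf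

lemma ecEx_meas {X : Type*} [MeasurableSpace X] (θ : ℝ) (n : ℕ) :
    Measurable (fun p : X × ℝ => ecEx (-(θ * p.2)) n) := by
  unfold ecEx; fun_prop

/-- tilted mass -/
noncomputable def ecT {X : Type*} [MeasurableSpace X] (μ : ℕ → Measure (X × ℝ)) (θ : ℝ)
    (A : Set (X × ℝ)) (n : ℕ) : ℝ≥0∞ := ∫⁻ p in A, ecEx (-(θ * p.2)) n ∂(μ n)

open ExpGrowth in
lemma ec_lower {X : Type*} [TopologicalSpace X] [MeasurableSpace X] [OpensMeasurableSpace (X × ℝ)]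
    (μ : ℕ → Measure (X × ℝ)) (J : X × ℝ → ℝ≥0∞) (h : SatisfiesLDP μ J)
    (θ : ℝ) (hθ : 0 < θ) (G : Set X) (hG : IsOpen G) (m : X) (hm : m ∈ G) (w : ℝ) :
    -(((θ * w : ℝ) : EReal) + (J (m, w) : EReal)) ≤ expGrowthInf (ecT μ θ (G ×ˢ univ)) := by
  have key : ∀ ε : ℝ, 0 < ε → ((-(θ * w) - ε : ℝ) : EReal) + -(J (m, w) : EReal)
      ≤ expGrowthInf (ecT μ θ (G ×ˢ univ)) := by
    intro ε hε
    have hU : IsOpen (G ×ˢ Iio (w + ε / θ)) := hG.prod isOpen_Iio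
    have h1 : -(J (m, w) : EReal) ≤ expGrowthInf (fun n => μ n (G ×ˢ Iio (w + ε / θ))) := by
      rw [← ec_inf_eq]
      refine le_trans ?_ (h.2 _ hU)
      rw [EReal.neg_le_neg_iff]
      exact iInf₂_le (m, w) ⟨hm, by simp; positivity⟩
    have h2 : expGrowthInf (ecEx (-(θ * w) - ε) * fun n => μ n (G ×ˢ Iio (w + ε / θ)))
        ≤ expGrowthInf (ecT μ θ (G ×ˢ univ)) := by
      apply expGrowthInf_monotone
      intro n
      simp only [Pi.mul_apply, ecT]
      rw [← setLIntegral_const]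
      refine le_trans (setLIntegral_mono' hU.measurableSet ?_)
        (lintegral_mono_set (prod_mono_right (subset_univ _)))
      rintro ⟨a, b⟩ ⟨-, hb⟩
      apply ecEx_mono
      simp only [mem_Iio] at hb
      have : θ * b < θ * (w + ε / θ) := by gcongr
      have h3 : θ * (w + ε / θ) = θ * w + ε := by field_simp
      simp only; linarith
    refine le_trans (le_trans ?_ le_expGrowthInf_mul) h2
    rw [ecEx_inf]
    gcongr
  have hJ : (J (m, w) : EReal) ≠ ⊥ := by simp
  by_cases hT : (J (m, w) : EReal) = ⊤
  · rw [hT, EReal.coe_add_top, EReal.neg_top]; exact bot_le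
  · lift (J (m, w) : EReal) to ℝ using ⟨hT, hJ⟩ with j hj
    refine EReal.ge_of_forall_gt_iff_ge.1 ?_
    intro z hz
    have hz' : z < -(θ * w + j) := by exact_mod_cast hz
    have := key (-(θ * w + j) - z) (by linarith)
    refine le_trans (le_of_eq ?_) this
    norm_cast
    ring

open ExpGrowth in
lemma ec_upper {X : Type*} [TopologicalSpace X] [MeasurableSpace X] [OpensMeasurableSpace (X × ℝ)]
    (μ : ℕ → Measure (X × ℝ)) [∀ n, IsProbabilityMeasure (μ n)]
    (J : X × ℝ → ℝ≥0∞) (h : SatisfiesLDP μ J)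
    (θ θ' : ℝ) (hθ : 0 < θ) (hθ' : θ < θ') (F : Set X) (hF : IsClosed F)
    (hmom : expGrowthSup (ecT μ θ' (F ×ˢ univ)) < ⊤) :
    expGrowthSup (ecT μ θ (F ×ˢ univ)) ≤
      -(⨅ m ∈ F, ⨅ w : ℝ, (((θ * w : ℝ) : EReal) + (J (m, w) : EReal))) := by
  set S := ⨅ m ∈ F, ⨅ w : ℝ, (((θ * w : ℝ) : EReal) + (J (m, w) : EReal)) with hS
  obtain ⟨C, hC, -⟩ := EReal.lt_iff_exists_real_btwn.1 hmom
  refine EReal.le_of_forall_lt_iff_le.1 ?_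
  intro a ha
  obtain ⟨b, hb, hba⟩ := EReal.lt_iff_exists_real_btwn.1 ha
  have hba' : b < a := by exact_mod_cast hba
  have hSb : ((-b : ℝ) : EReal) ≤ S := by
    rw [EReal.coe_neg, EReal.neg_le]; exact hb.le
  set ε := (a - b) / θ with hε
  have hε0 : 0 < ε := div_pos (by linarith) hθ
  set K := max ((C - a) / (θ' - θ)) (-a / θ) with hK
  have hK1 : C - (θ' - θ) * K ≤ a := by
    have := le_max_left ((C - a) / (θ' - θ)) (-a / θ)
    rw [← hK, div_le_iff₀ (by linarith)] at this
    linarith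
  have hK2 : -(θ * K) ≤ a := by
    have := le_max_right ((C - a) / (θ' - θ)) (-a / θ)
    rw [← hK, div_le_iff₀ (by linarith)] at this
    linarith
  obtain ⟨N, hN⟩ := exists_nat_gt (2 * K / ε)
  rw [div_lt_iff₀ hε0] at hN
  let c : ℕ → ℝ := fun j => -K + j * ε
  let A1 := F ×ˢ Iio (-K)
  let A2 := F ×ˢ Ici K
  let A3 : ℕ → Set (X × ℝ) := fun j => F ×ˢ Icc (c j) (c j + ε)
  have hA3c : ∀ j, IsClosed (A3 j) := fun j => hF.prod isClosed_Icc
  have hFm : MeasurableSet (F ×ˢ (univ : Set ℝ)) := (hF.prod isClosed_univ).measurableSet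
  have hA2m : MeasurableSet A2 := (hF.prod isClosed_Ici).measurableSet
  have hA1m : MeasurableSet A1 := by
    have : A1 = (F ×ˢ univ) ∩ (univ ×ˢ Iio (-K)) := by ext ⟨x, y⟩; simp [A1]
    rw [this]
    exact hFm.inter (isOpen_univ.prod isOpen_Iio).measurableSet
  have hcov : F ×ˢ univ ⊆ A1 ∪ (A2 ∪ ⋃ j : Fin N, A3 j) := by
    rintro ⟨x, w⟩ ⟨hx, -⟩
    simp only at hx
    by_cases h1 : w < -K
    · left; exact ⟨hx, h1⟩
    by_cases h2 : K ≤ w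
    · right; left; exact ⟨hx, h2⟩
    right; right
    push Not at h1 h2
    have h0 : 0 ≤ (w + K) / ε := div_nonneg (by linarith) hε0.le
    have hf1 := Nat.floor_le h0
    have hf2 := Nat.lt_floor_add_one ((w + K) / ε)
    rw [le_div_iff₀ hε0] at hf1
    rw [div_lt_iff₀ hε0] at hf2
    have hlt : ⌊(w + K) / ε⌋₊ < N := by
      have : (⌊(w + K) / ε⌋₊ : ℝ) * ε < N * ε := by linarith
      exact_mod_cast lt_of_mul_lt_mul_right this hε0.le
    refine mem_iUnion.2 ⟨⟨_, hlt⟩, hx, ?_, ?_⟩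
    · simp only [c]; linarith
    · simp only [c]; linarith
  have hle : ecT μ θ (F ×ˢ univ) ≤ ecT μ θ A1 + (ecT μ θ A2 + ∑ j : Fin N, ecT μ θ (A3 j)) := by
    intro n
    simp only [Pi.add_apply, Finset.sum_apply, ecT]
    refine (lintegral_mono_set hcov).trans ((lintegral_union_le _ _ _).trans ?_)
    gcongr
    refine (lintegral_union_le _ _ _).trans ?_
    gcongr
    refine (lintegral_iUnion_le _ _).trans ?_
    rw [tsum_fintype]
  have h1 : expGrowthSup (ecT μ θ A1) ≤ a := by
    have : ecT μ θ A1 ≤ ecEx (-((θ' - θ) * K)) * ecT μ θ' (F ×ˢ univ) := by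
      intro n
      simp only [Pi.mul_apply, ecT]
      rw [← lintegral_const_mul _ (ecEx_meas _ _)]
      refine le_trans (setLIntegral_mono' hA1m ?_)
        (lintegral_mono_set (prod_mono_right (subset_univ _)))
      rintro ⟨x, w⟩ ⟨-, hw⟩
      simp only [mem_Iio] at hw
      rw [ecEx_mul]
      apply ecEx_mono
      simp only
      nlinarith
    refine (expGrowthSup_monotone this).trans ((expGrowthSup_mul_le ?_ ?_).trans ?_)
    · rw [ecEx_sup]; left; exact EReal.coe_ne_bot _
    · rw [ecEx_sup]; left; exact EReal.coe_ne_top _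
    rw [ecEx_sup]
    refine (add_le_add le_rfl hC.le).trans ?_
    norm_cast; linarith
  have h2 : expGrowthSup (ecT μ θ A2) ≤ a := by
    have : ecT μ θ A2 ≤ ecEx (-(θ * K)) := by
      intro n
      simp only [ecT]
      calc _ ≤ ∫⁻ p in A2, ecEx (-(θ * K)) n ∂(μ n) := by
            refine setLIntegral_mono' hA2m ?_
            rintro ⟨x, w⟩ ⟨-, hw⟩
            simp only [mem_Ici] at hw
            apply ecEx_mono
            simp only
            nlinarith
        _ ≤ _ := by
            rw [setLIntegral_const]
            exact mul_le_of_le_one_right' prob_le_one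
    refine (expGrowthSup_monotone this).trans ?_
    rw [ecEx_sup]
    exact_mod_cast hK2
  have h3 : ∀ j, expGrowthSup (ecT μ θ (A3 j)) ≤ a := by
    intro j
    have : ecT μ θ (A3 j) ≤ ecEx (-(θ * c j)) * fun n => μ n (A3 j) := by
      intro n
      simp only [ecT, Pi.mul_apply]
      rw [← setLIntegral_const]
      refine setLIntegral_mono' (hA3c j).measurableSet ?_
      rintro ⟨x, w⟩ ⟨-, hw⟩
      simp only [mem_Icc] at hw
      apply ecEx_mono
      simp only
      nlinarith
    have hI : ((-(b + θ * (c j + ε)) : ℝ) : EReal) ≤ ⨅ x ∈ A3 j, (J x : EReal) := by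
      refine le_iInf₂ ?_
      rintro ⟨x, w⟩ ⟨hx, hw⟩
      simp only [mem_Icc] at hx hw
      have hle : ((-b : ℝ) : EReal) ≤ ((θ * w : ℝ) : EReal) + (J (x, w) : EReal) :=
        hSb.trans (iInf₂_le_of_le x hx (iInf_le _ w))
      have hJ : (J (x, w) : EReal) ≠ ⊥ := by simp
      by_cases hT : (J (x, w) : EReal) = ⊤
      · rw [hT]; simp
      · lift (J (x, w) : EReal) to ℝ using ⟨hT, hJ⟩ with t
        norm_cast at hle ⊢
        nlinarith
    have hsup : expGrowthSup (fun n => μ n (A3 j)) ≤ ((b + θ * (c j + ε) : ℝ) : EReal) := by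
      rw [← ec_sup_eq]
      refine (h.1 _ (hA3c j)).trans ?_
      rw [EReal.neg_le, ← EReal.coe_neg]
      exact hI
    refine (expGrowthSup_monotone this).trans ((expGrowthSup_mul_le ?_ ?_).trans ?_)
    · rw [ecEx_sup]; left; exact EReal.coe_ne_bot _
    · rw [ecEx_sup]; left; exact EReal.coe_ne_top _
    rw [ecEx_sup]
    refine (add_le_add le_rfl hsup).trans ?_
    have : θ * ε = a - b := by rw [hε]; field_simp
    norm_cast
    nlinarith
  refine (expGrowthSup_monotone hle).trans ?_
  rw [expGrowthSup_add, expGrowthSup_add]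
  refine max_le h1 (max_le h2 ?_)
  rw [expGrowthSup_sum]
  exact iSup₂_le fun j _ => h3 j

lemma ec_coe_iInf {X : Type*} (s : Set X) (f : X → ℝ≥0∞) :
    ((⨅ m ∈ s, f m : ℝ≥0∞) : EReal) = ⨅ m ∈ s, (f m : EReal) := by
  rw [iInf_subtype', iInf_subtype']
  exact Monotone.map_iInf_of_continuousAt continuous_coe_ennreal_ereal.continuousAt
    EReal.coe_ennreal_strictMono.monotone rfl

lemma ec_bridge {Λ X : Type*} [MeasurableSpace Λ] [MeasurableSpace X] (P Q : Measure Λ)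
    [IsProbabilityMeasure P] [IsProbabilityMeasure Q] (hPQ : P ≪ Q) (hQP : Q ≪ P)
    (M : Λ → X) (hM : Measurable M) (n : ℕ) (hn : n ≠ 0) (θ : ℝ) (A : Set X)
    (hA : MeasurableSet A) :
    ∫⁻ x in {x | M x ∈ A}, (P.rnDeriv Q x) ^ θ ∂Q
      = ∫⁻ p in A ×ˢ univ, ecEx (-(θ * p.2)) n ∂(Q.map (fun x => (M x, action P Q n x))) := by
  have hact : Measurable (action P Q n) := by
    unfold action
    exact ((Real.measurable_log.comp (Measure.measurable_rnDeriv P Q).ennreal_toReal)).const_mul _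
  rw [setLIntegral_map (hA.prod MeasurableSet.univ) (ecEx_meas θ n) (hM.prodMk hact)]
  have hset : (fun x => (M x, action P Q n x)) ⁻¹' A ×ˢ univ = {x | M x ∈ A} := by
    ext x; simp
  rw [hset]
  refine lintegral_congr_ae (ae_restrict_of_ae ?_)
  have hpos := hQP.ae_le (Measure.rnDeriv_pos hPQ)
  filter_upwards [hpos, P.rnDeriv_lt_top Q] with x h0 h1
  have hr : 0 < (P.rnDeriv Q x).toReal := ENNReal.toReal_pos h0.ne' h1.ne
  have hn' : (n : ℝ) ≠ 0 := by exact_mod_cast hn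
  simp only [ecEx, action]
  conv_lhs => rw [← ENNReal.ofReal_toReal h1.ne]
  rw [ENNReal.ofReal_rpow_of_pos hr, Real.rpow_def_of_pos hr]
  congr 2
  field_simp

/-- Under Assumptions 1, 2 and 3, `Q_n` is asymptotically efficient if and only if
`inf_(m ∈ B, w) (2w + J_Q(m,w)) = 2 inf_(m ∈ B, w) (w + J_Q(m,w))`. -/
theorem efficiency_variational_criterion
    {D : ℕ} {Λ : ℕ → Type*} [∀ n, MeasurableSpace (Λ n)]
    (P Q : ∀ n, Measure (Λ n))
    [∀ n, IsProbabilityMeasure (P n)] [∀ n, IsProbabilityMeasure (Q n)]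
    (habs : ∀ n, P n ≪ Q n ∧ Q n ≪ P n)
    (M : ∀ n, Λ n → (Fin D → ℝ)) (hM : ∀ n, Measurable (M n))
    (B : Set (Fin D → ℝ)) (hB : MeasurableSet B)
    (I_P : (Fin D → ℝ) → ℝ≥0∞)
    (hLDP_M : SatisfiesLDP (fun n => (P n).map (M n)) I_P)
    (hIPgood : IsGoodRate I_P)
    (hIPB : (⨅ m ∈ interior B, I_P m) = ⨅ m ∈ closure B, I_P m)
    (hIPBfin : (⨅ m ∈ closure B, I_P m) ≠ ⊤)
    (δ : ℝ) (hδ : 0 < δ)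
    (hmom : limsup (fun n : ℕ => expRate n
        (∫⁻ x in {x | M n x ∈ closure B},
          ((P n).rnDeriv (Q n) x) ^ ((2 : ℝ) + δ) ∂(Q n))) atTop < ⊤)
    (J_P J_Q : (Fin D → ℝ) × ℝ → ℝ≥0∞)
    (hLDP_P : SatisfiesLDP (fun n => (P n).map (fun x => (M n x, action (P n) (Q n) n x))) J_P)
    (hLDP_Q : SatisfiesLDP (fun n => (Q n).map (fun x => (M n x, action (P n) (Q n) n x))) J_Q)
    (hJPgood : IsGoodRate J_P) (hJQgood : IsGoodRate J_Q)
    (hdom : {p | J_P p ≠ ⊤} = {p | J_Q p ≠ ⊤})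
    (hne : {p | J_P p ≠ ⊤}.Nonempty)
    (hBgood : (⨅ m ∈ interior B, ⨅ w : ℝ, (((2 * w : ℝ) : EReal) + (J_Q (m, w) : EReal)))
      = ⨅ m ∈ closure B, ⨅ w : ℝ, (((2 * w : ℝ) : EReal) + (J_Q (m, w) : EReal)))
    :
    Tendsto (fun n : ℕ => -expRate n (∫⁻ x in {x | M n x ∈ B}, ((P n).rnDeriv (Q n) x) ^ 2 ∂(Q n))) atTop
        (𝓝 (2 * ⨅ m ∈ closure B, (I_P m : EReal)))
      ↔ (⨅ m ∈ B, ⨅ w : ℝ, (((2 * w : ℝ) : EReal) + (J_Q (m, w) : EReal)))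
          = 2 * ⨅ m ∈ B, ⨅ w : ℝ, ((w : EReal) + (J_Q (m, w) : EReal)) := by
  have hb := fun (n : ℕ) (hn : n ≠ 0) (θ : ℝ) (A : Set (Fin D → ℝ)) (hA : MeasurableSet A) =>
    ec_bridge (P n) (Q n) (habs n).1 (habs n).2 (M n) (hM n) n hn θ A hA
  have hact : ∀ n, Measurable (action (P n) (Q n) n) := by
    intro n
    unfold action
    exact ((Real.measurable_log.comp
      (Measure.measurable_rnDeriv (P n) (Q n)).ennreal_toReal)).const_mul _
  set μ : ℕ → Measure ((Fin D → ℝ) × ℝ) :=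
    fun n => (Q n).map (fun x => (M n x, action (P n) (Q n) n x)) with hμ
  have : ∀ n, IsProbabilityMeasure (μ n) := fun n =>
    Measure.isProbabilityMeasure_map ((hM n).prodMk (hact n)).aemeasurable
  have hTeq : ∀ (θ : ℝ) (A : Set (Fin D → ℝ)), MeasurableSet A →
      (fun n => ∫⁻ x in {x | M n x ∈ A}, ((P n).rnDeriv (Q n) x) ^ θ ∂(Q n))
        =ᶠ[atTop] ecT μ θ (A ×ˢ univ) := by
    intro θ A hA
    filter_upwards [eventually_ne_atTop 0] with n hn
    exact hb n hn θ A hA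
  have hP : ∀ A : Set (Fin D → ℝ), MeasurableSet A →
      (fun n => (P n).map (M n) A) =ᶠ[atTop] ecT μ 1 (A ×ˢ univ) := by
    intro A hA
    filter_upwards [hTeq 1 A hA] with n hn
    rw [← hn, Measure.map_apply (hM n) hA]
    simp only [ENNReal.rpow_one]
    exact (Measure.setLIntegral_rnDeriv (habs n).1 _).symm
  have hmono : ∀ (θ : ℝ) {A A' : Set (Fin D → ℝ)}, A ⊆ A' →
      ecT μ θ (A ×ˢ univ) ≤ ecT μ θ (A' ×ˢ univ) := fun θ A A' hAA n =>
    lintegral_mono_set (prod_mono_left hAA)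
  have hmomT : ExpGrowth.expGrowthSup (ecT μ (2 + δ) (closure B ×ˢ univ)) < ⊤ := by
    rw [ec_sup_eq, ExpGrowth.expGrowthSup_congr (hTeq _ _ isClosed_closure.measurableSet)] at hmom
    exact hmom
  -- the second moment
  have hlim : Tendsto (fun n : ℕ => -expRate n
      (∫⁻ x in {x | M n x ∈ B}, ((P n).rnDeriv (Q n) x) ^ 2 ∂(Q n))) atTop
      (𝓝 (⨅ m ∈ B, ⨅ w : ℝ, (((2 * w : ℝ) : EReal) + (J_Q (m, w) : EReal)))) := by
    set V := ⨅ m ∈ B, ⨅ w : ℝ, (((2 * w : ℝ) : EReal) + (J_Q (m, w) : EReal)) with hV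
    have hV1 : V ≤ ⨅ m ∈ closure B, ⨅ w : ℝ, (((2 * w : ℝ) : EReal) + (J_Q (m, w) : EReal)) := by
      rw [← hBgood]
      exact biInf_mono fun m hm => interior_subset hm
    have hV2 : (⨅ m ∈ interior B, ⨅ w : ℝ, (((2 * w : ℝ) : EReal) + (J_Q (m, w) : EReal)))
        ≤ V := by
      rw [hBgood]
      exact biInf_mono fun m hm => subset_closure hm
    have he : (fun n => ∫⁻ x in {x | M n x ∈ B}, ((P n).rnDeriv (Q n) x) ^ 2 ∂(Q n))
        =ᶠ[atTop] ecT μ 2 (B ×ˢ univ) := by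
      filter_upwards [hTeq 2 B hB] with n hn
      rw [← hn]
      simp only [ENNReal.rpow_two]
    have hup : ExpGrowth.expGrowthSup (ecT μ 2 (B ×ˢ univ)) ≤ -V := by
      refine (ExpGrowth.expGrowthSup_monotone (hmono 2 subset_closure)).trans ?_
      refine (ec_upper μ J_Q hLDP_Q 2 (2 + δ) (by norm_num) (by linarith) _
        isClosed_closure hmomT).trans ?_
      rw [EReal.neg_le_neg_iff]
      exact hV1
    have hlo : -V ≤ ExpGrowth.expGrowthInf (ecT μ 2 (B ×ˢ univ)) := by
      refine le_trans ?_ (ExpGrowth.expGrowthInf_monotone (hmono 2 interior_subset))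
      rw [EReal.neg_le]
      refine le_trans ?_ hV2
      refine le_iInf₂ fun m hm => le_iInf fun w => ?_
      rw [EReal.neg_le]
      exact ec_lower μ J_Q hLDP_Q 2 (by norm_num) _ isOpen_interior m hm w
    have ht : Tendsto (fun n : ℕ => expRate n
      (∫⁻ x in {x | M n x ∈ B}, ((P n).rnDeriv (Q n) x) ^ 2 ∂(Q n))) atTop (𝓝 (-V)) := by
      refine tendsto_of_le_liminf_of_limsup_le ?_ ?_
      · rw [ec_inf_eq, ExpGrowth.expGrowthInf_congr he]; exact hlo
      · rw [ec_sup_eq, ExpGrowth.expGrowthSup_congr he]; exact hup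
    have := (continuous_neg.tendsto (-V)).comp ht
    rw [neg_neg] at this
    exact this
  -- the first moment
  have hIP : (⨅ m ∈ closure B, (I_P m : EReal))
      = ⨅ m ∈ B, ⨅ w : ℝ, ((w : EReal) + (J_Q (m, w) : EReal)) := by
    apply le_antisymm
    · refine le_iInf₂ fun m hm => le_iInf fun w => ?_
      refine (iInf₂_le m (subset_closure hm)).trans ?_
      by_contra hlt
      rw [not_le] at hlt
      obtain ⟨a, ha1, ha2⟩ := exists_between hlt
      have hlsc : LowerSemicontinuous (fun m => (I_P m : EReal)) :=
        continuous_coe_ennreal_ereal.comp_lowerSemicontinuous hIPgood.1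
          EReal.coe_ennreal_strictMono.monotone
      obtain ⟨F, hF, hFc, hFs⟩ := exists_mem_nhds_isClosed_subset (hlsc m a ha2)
      have h1 := ec_lower μ J_Q hLDP_Q 1 one_pos (interior F) isOpen_interior m
        (mem_interior_iff_mem_nhds.2 hF) w
      have h2 := h1.trans ((ExpGrowth.expGrowthInf_monotone (hmono 1 interior_subset)).trans
        ExpGrowth.expGrowthInf_le_expGrowthSup)
      rw [← ExpGrowth.expGrowthSup_congr (hP F hFc.measurableSet), ← ec_sup_eq] at h2
      have h3 := h2.trans (hLDP_M.1 F hFc)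
      rw [EReal.neg_le_neg_iff, one_mul] at h3
      have h4 : a ≤ ⨅ x ∈ F, (I_P x : EReal) := le_iInf₂ fun x hx => le_of_lt (hFs hx)
      exact absurd (h4.trans h3) (not_le.2 ha1)
    · rw [← ec_coe_iInf, ← hIPB, ec_coe_iInf]
      refine le_iInf₂ fun m hm => ?_
      obtain ⟨F, hF, hFc, hFs⟩ := exists_mem_nhds_isClosed_subset (isOpen_interior.mem_nhds hm)
      have hFB : F ⊆ B := hFs.trans interior_subset
      have h1 : -(I_P m : EReal) ≤ ExpGrowth.expGrowthInf (fun n => (P n).map (M n) (interior F)) := by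
        rw [← ec_inf_eq]
        refine le_trans ?_ (hLDP_M.2 _ isOpen_interior)
        rw [EReal.neg_le_neg_iff]
        exact iInf₂_le m (mem_interior_iff_mem_nhds.2 hF)
      rw [ExpGrowth.expGrowthInf_congr (hP _ isOpen_interior.measurableSet)] at h1
      have h2 := h1.trans ((ExpGrowth.expGrowthInf_monotone (hmono 1 interior_subset)).trans
        ExpGrowth.expGrowthInf_le_expGrowthSup)
      have h3 := h2.trans (ec_upper μ J_Q hLDP_Q 1 (2 + δ) one_pos (by linarith) F hFc
        ((ExpGrowth.expGrowthSup_monotone (hmono _ (hFB.trans subset_closure))).trans_lt hmomT))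
      rw [EReal.neg_le_neg_iff] at h3
      simp only [one_mul] at h3
      refine le_trans ?_ h3
      exact biInf_mono fun x hx => hFB hx
  rw [hIP]
  constructor
  · intro h
    exact tendsto_nhds_unique hlim h
  · intro h
    rw [← h]
    exact hlim
end

section
/- Let P_n = N(0,1)^⊗n and Q_n = N(1,1)^⊗n on ℝⁿ, let M_n(x) = (1/n) Σ_{i=1}^n x_i, and let L_n = dP_n/dQ_n, so that L_n(x) = exp(−n(M_n(x) − 1/2)) for almost every x. Then lim_{n→∞} −(1/n) log P_n(M_n ≥ 1) = 1/2 and lim_{n→∞} −(1/n) log E_{Q_n}[L_n² 1_{M_n ≥ 1}] = 1; in particular the second limit equals twice the first, i.e. Q_n is asymptotically efficient for estimating P_n(M_n ≥ 1). -/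
open MeasureTheory Filter Set Topology
open scoped ENNReal NNReal

open ProbabilityTheory

lemma gse_one : gaussianReal 0 1 =
    (gaussianReal 1 1).withDensity (fun x => ENNReal.ofReal (Real.exp (-(x - 1/2)))) := by
  rw [gaussianReal_of_var_ne_zero 0 one_ne_zero, gaussianReal_of_var_ne_zero 1 one_ne_zero,
    ← withDensity_mul _ (measurable_gaussianPDF _ _) (by fun_prop)]
  congr 1
  ext x
  simp only [gaussianPDF, Pi.mul_apply]
  rw [← ENNReal.ofReal_mul (gaussianPDFReal_nonneg _ _ _)]
  congr 1
  simp only [gaussianPDFReal]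
  rw [mul_assoc _ (Real.exp _) (Real.exp _), ← Real.exp_add]
  congr 2
  push_cast
  ring

lemma gse_pi (n : ℕ) : (Measure.pi fun _ : Fin n => gaussianReal 0 1) =
    (Measure.pi fun _ : Fin n => gaussianReal 1 1).withDensity
      (fun x => ∏ i, ENNReal.ofReal (Real.exp (-(x i - 1/2)))) := by
  refine Measure.pi_eq fun s hs => ?_
  rw [withDensity_apply _ (MeasurableSet.univ_pi hs), ← lintegral_indicator (MeasurableSet.univ_pi hs)]
  have h : ∀ x : Fin n → ℝ, (Set.univ.pi s).indicator
      (fun x : Fin n → ℝ => ∏ i, ENNReal.ofReal (Real.exp (-(x i - 1/2)))) x =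
      ∏ i, (s i).indicator (fun y : ℝ => ENNReal.ofReal (Real.exp (-(y - 1/2)))) (x i) := by
    intro x
    by_cases hx : x ∈ Set.univ.pi s
    · rw [Set.indicator_of_mem hx]
      refine Finset.prod_congr rfl fun i _ => ?_
      rw [Set.indicator_of_mem (hx i (Set.mem_univ i))]
    · rw [Set.indicator_of_notMem hx]
      simp only [Set.mem_pi, Set.mem_univ, true_imp_iff, not_forall] at hx
      obtain ⟨i, hi⟩ := hx
      exact (Finset.prod_eq_zero (Finset.mem_univ i) (Set.indicator_of_notMem hi _)).symm
  have hm : ∀ i, Measurable ((s i).indicator (fun y : ℝ => ENNReal.ofReal (Real.exp (-(y - 1/2))))) :=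
    fun i => Measurable.indicator (by fun_prop) (hs i)
  simp_rw [h]
  rw [lintegral_prod_eq_prod_lintegral_of_indepFun Finset.univ
    (fun i (x : Fin n → ℝ) => (s i).indicator (fun y : ℝ => ENNReal.ofReal (Real.exp (-(y - 1/2)))) (x i))
    (iIndepFun_pi (fun i => (hm i).aemeasurable)) (fun i => (hm i).comp (measurable_pi_apply i))]
  refine Finset.prod_congr rfl fun i _ => ?_
  rw [(measurePreserving_eval (fun _ : Fin n => gaussianReal 1 1) i).lintegral_comp (hm i),
    lintegral_indicator (hs i), ← withDensity_apply _ (hs i), ← gse_one]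

lemma gse_dens (n : ℕ) (x : Fin n → ℝ) :
    ∏ i, ENNReal.ofReal (Real.exp (-(x i - 1/2))) =
      ENNReal.ofReal (Real.exp (-(∑ i, x i - n / 2))) := by
  rw [← ENNReal.ofReal_prod_of_nonneg (fun _ _ => (Real.exp_pos _).le), ← Real.exp_sum]
  congr 2
  rw [Finset.sum_neg_distrib, Finset.sum_sub_distrib]
  simp
  ring

lemma gse_pi' (n : ℕ) : (Measure.pi fun _ : Fin n => gaussianReal 0 1) =
    (Measure.pi fun _ : Fin n => gaussianReal 1 1).withDensity
      (fun x => ENNReal.ofReal (Real.exp (-(∑ i, x i - n / 2)))) := by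
  rw [gse_pi]; simp_rw [gse_dens]

lemma gse_rn (n : ℕ) : ∀ᵐ x ∂(Measure.pi fun _ : Fin n => gaussianReal 1 1),
        (Measure.pi fun _ : Fin n => gaussianReal 0 1).rnDeriv
            (Measure.pi fun _ : Fin n => gaussianReal 1 1) x =
          ENNReal.ofReal (Real.exp (-(∑ i, x i - n / 2))) := by
  have := Measure.rnDeriv_withDensity (Measure.pi fun _ : Fin n => gaussianReal 1 1)
    (f := fun x => ENNReal.ofReal (Real.exp (-(∑ i, x i - n / 2)))) (by fun_prop)
  rw [← gse_pi'] at this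
  exact this

lemma gse_sum (n : ℕ) (s : Finset (Fin n)) :
    (Measure.pi fun _ : Fin n => gaussianReal 1 1).map (∑ i ∈ s, fun x => x i) =
      gaussianReal s.card s.card := by
  have hI : iIndepFun (fun i (x : Fin n → ℝ) => x i) (Measure.pi fun _ : Fin n => gaussianReal 1 1) :=
    iIndepFun_pi (X := fun _ => id) (fun _ => aemeasurable_id)
  induction s using Finset.cons_induction with
  | empty =>
    simp only [Finset.sum_empty, Finset.card_empty, Nat.cast_zero, gaussianReal_zero_var]
    have : (0 : (Fin n → ℝ) → ℝ) = fun _ => 0 := rfl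
    rw [this, Measure.map_const]; simp
  | cons j s hj ih =>
    rw [Finset.sum_cons, gaussianReal_add_gaussianReal_of_indepFun
      (hI.indepFun_finsetSum_of_notMem (fun i => measurable_pi_apply i) hj).symm
      (measurePreserving_eval (fun _ : Fin n => gaussianReal 1 1) j).map_eq ih]
    rw [Finset.card_cons]
    push_cast
    rw [add_comm (1 : ℝ), add_comm (1 : ℝ≥0)]

lemma gse_c (n : ℕ) (hn : 0 < n) :
    (Measure.pi fun _ : Fin n => gaussianReal 1 1)
      {x | (n : ℝ) ≤ ∑ i, x i ∧ ∑ i, x i ≤ n + √n} = gaussianReal 0 1 (Set.Icc 0 1) := by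
  have hn' : (0 : ℝ) < n := by exact_mod_cast hn
  have hs : 0 < √(n : ℝ) := Real.sqrt_pos.2 hn'
  have h1 := gse_sum n Finset.univ
  rw [Finset.card_univ, Fintype.card_fin] at h1
  have h2 : ((gaussianReal (n : ℝ) (n : ℝ≥0)).map (fun y : ℝ => y - (n : ℝ))).map (fun y : ℝ => y / √(n : ℝ))
      = gaussianReal 0 1 := by
    rw [gaussianReal_map_sub_const, gaussianReal_map_div_const]
    congr 1
    · simp
    · ext; simp [Real.sq_sqrt hn'.le, hn'.ne']
  rw [← h2, Measure.map_map (by fun_prop) (by fun_prop), ← h1,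
    Measure.map_map (by fun_prop) (by fun_prop), Measure.map_apply (by fun_prop) measurableSet_Icc]
  congr 1
  ext x
  simp only [Set.mem_ofPred_eq, Set.mem_preimage, Function.comp, Set.mem_Icc, Finset.sum_apply]
  rw [le_div_iff₀ hs, div_le_one hs]
  constructor <;> rintro ⟨a, b⟩ <;> constructor <;> linarith

lemma gse_cpos : 0 < gaussianReal 0 1 (Set.Icc 0 1) := by
  rw [pos_iff_ne_zero]
  intro h
  have := gaussianReal_absolutelyContinuous' 0 (one_ne_zero) h
  simp at this

lemma gse_low (k : ℝ) (hk : 0 ≤ k) (n : ℕ) (hn : 0 < n) :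
    ENNReal.ofReal (Real.exp (-k * (n / 2 + √n))) *
      (Measure.pi fun _ : Fin n => gaussianReal 1 1)
        {x | (n : ℝ) ≤ ∑ i, x i ∧ ∑ i, x i ≤ n + √n} ≤
    ∫⁻ x in {x : Fin n → ℝ | 1 ≤ (n : ℝ)⁻¹ * ∑ i, x i},
      ENNReal.ofReal (Real.exp (-k * (∑ i, x i - n / 2)))
      ∂(Measure.pi fun _ : Fin n => gaussianReal 1 1) := by
  have hn' : (0 : ℝ) < n := by exact_mod_cast hn
  set B : Set (Fin n → ℝ) := {x | (n : ℝ) ≤ ∑ i, x i ∧ ∑ i, x i ≤ n + √n} with hB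
  have hm : Measurable (fun x : Fin n → ℝ =>
      ENNReal.ofReal (Real.exp (-k * (∑ i, x i - (n : ℝ) / 2)))) := by fun_prop
  have h1 : ∀ x ∈ B, ENNReal.ofReal (Real.exp (-k * ((n : ℝ) / 2 + √n))) ≤
      ENNReal.ofReal (Real.exp (-k * (∑ i, x i - (n : ℝ) / 2))) := by
    intro x hx
    rw [hB, Set.mem_ofPred_eq] at hx
    refine ENNReal.ofReal_le_ofReal (Real.exp_le_exp.2 ?_)
    have h3 := mul_le_mul_of_nonneg_left hx.2 hk
    linarith
  have h2 : B ⊆ {x : Fin n → ℝ | 1 ≤ (n : ℝ)⁻¹ * ∑ i, x i} := by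
    intro x hx
    rw [hB, Set.mem_ofPred_eq] at hx
    rw [Set.mem_ofPred_eq, inv_mul_eq_div, one_le_div hn']
    exact hx.1
  rw [← setLIntegral_const]
  exact (setLIntegral_mono hm h1).trans (lintegral_mono_set h2)

lemma gse_lim (k : ℝ) (hk : 0 ≤ k) (J : ℕ → ℝ≥0∞)
    (hJ : ∀ n : ℕ, 0 < n → J n = ∫⁻ x in {x : Fin n → ℝ | 1 ≤ (n : ℝ)⁻¹ * ∑ i, x i},
      ENNReal.ofReal (Real.exp (-k * (∑ i, x i - n / 2)))
      ∂(Measure.pi fun _ : Fin n => gaussianReal 1 1)) :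
    Tendsto (fun n : ℕ => -expRate n (J n)) atTop (𝓝 ((k / 2 : ℝ) : EReal)) := by
  set c : ℝ := (gaussianReal 0 1 (Set.Icc 0 1)).toReal with hc
  have hc0 : 0 < c := ENNReal.toReal_pos gse_cpos.ne' (measure_ne_top _ _)
  have hcc : gaussianReal 0 1 (Set.Icc 0 1) = ENNReal.ofReal c :=
    (ENNReal.ofReal_toReal (measure_ne_top _ _)).symm
  have hup : ∀ n : ℕ, 0 < n → J n ≤ ENNReal.ofReal (Real.exp (-k * (n / 2))) := by
    intro n hn
    have hn' : (0 : ℝ) < n := by exact_mod_cast hn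
    rw [hJ n hn]
    refine (setLIntegral_mono (g := fun _ => ENNReal.ofReal (Real.exp (-k * (n / 2))))
      (by fun_prop) ?_).trans ?_
    · intro x hx
      simp only [Set.mem_ofPred_eq] at hx
      rw [inv_mul_eq_div, one_le_div hn'] at hx
      refine ENNReal.ofReal_le_ofReal (Real.exp_le_exp.2 ?_)
      nlinarith
    · rw [setLIntegral_const]
      exact mul_le_of_le_one_right' prob_le_one
  have hlow : ∀ n : ℕ, 0 < n → ENNReal.ofReal (Real.exp (-k * (n / 2 + √n)) * c) ≤ J n := by
    intro n hn
    have hn' : (0 : ℝ) < n := by exact_mod_cast hn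
    rw [hJ n hn, ENNReal.ofReal_mul (Real.exp_pos _).le, ← hcc, ← gse_c n hn]
    exact gse_low k hk n hn
  have key : ∀ n : ℕ, 0 < n → ∃ j : ℝ, -expRate n (J n) = (j : EReal) ∧ k / 2 ≤ j ∧
      j ≤ k / 2 + k * (√n)⁻¹ - Real.log c * (n : ℝ)⁻¹ := by
    intro n hn
    have hn' : (0 : ℝ) < n := by exact_mod_cast hn
    have hs : 0 < √(n : ℝ) := Real.sqrt_pos.2 hn'
    have hss : √(n : ℝ) * √n = n := Real.mul_self_sqrt hn'.le
    have hfin : J n ≠ ⊤ := ne_top_of_le_ne_top ENNReal.ofReal_ne_top (hup n hn)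
    have l2 : Real.exp (-k * (n / 2 + √n)) * c ≤ (J n).toReal :=
      (ENNReal.ofReal_le_iff_le_toReal hfin).1 (hlow n hn)
    have l1 : (J n).toReal ≤ Real.exp (-k * (n / 2)) :=
      ENNReal.toReal_le_of_le_ofReal (Real.exp_pos _).le (hup n hn)
    have hp : 0 < (J n).toReal := lt_of_lt_of_le (by positivity) l2
    refine ⟨-((n : ℝ)⁻¹ * Real.log (J n).toReal), ?_, ?_, ?_⟩
    · rw [expRate, ENNReal.log_pos_real' hp]
      push_cast
      rfl
    · have := Real.log_le_log hp l1
      rw [Real.log_exp] at this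
      rw [inv_mul_eq_div, ← neg_div, le_div_iff₀ hn']
      linarith
    · have := Real.log_le_log (by positivity) l2
      rw [Real.log_mul (Real.exp_pos _).ne' hc0.ne', Real.log_exp] at this
      have e : (√(n : ℝ))⁻¹ = √n * (n : ℝ)⁻¹ := by
        field_simp
        linarith
      rw [inv_mul_eq_div, ← neg_div, div_le_iff₀ hn', e]
      have e2 : (k / 2 + k * (√n * (n : ℝ)⁻¹) - Real.log c * (n : ℝ)⁻¹) * n =
        k / 2 * n + k * √n - Real.log c := by field_simp
      rw [e2]
      linarith
  have ht : Tendsto (fun n : ℕ => k / 2 + k * (√(n : ℝ))⁻¹ - Real.log c * (n : ℝ)⁻¹) atTop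
      (𝓝 (k / 2)) := by
    have a1 : Tendsto (fun n : ℕ => (√(n : ℝ))⁻¹) atTop (𝓝 0) :=
      tendsto_inv_atTop_zero.comp (Real.tendsto_sqrt_atTop.comp tendsto_natCast_atTop_atTop)
    have a2 : Tendsto (fun n : ℕ => (n : ℝ)⁻¹) atTop (𝓝 0) :=
      tendsto_inv_atTop_zero.comp tendsto_natCast_atTop_atTop
    simpa using ((a1.const_mul k).const_add (k / 2)).sub (a2.const_mul (Real.log c))
  refine tendsto_of_tendsto_of_tendsto_of_le_of_le' tendsto_const_nhds
    ((continuous_coe_real_ereal.tendsto _).comp ht) ?_ ?_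
  · filter_upwards [eventually_gt_atTop 0] with n hn
    obtain ⟨j, h1, h2, h3⟩ := key n hn
    rw [h1]; exact EReal.coe_le_coe_iff.2 h2
  · filter_upwards [eventually_gt_atTop 0] with n hn
    obtain ⟨j, h1, h2, h3⟩ := key n hn
    rw [h1]; exact EReal.coe_le_coe_iff.2 h3


/-- For `P_n = N(0,1)^{⊗n}`, `Q_n = N(1,1)^{⊗n}` and the sample mean `M_n`:
`L_n = exp(-n(M_n - 1/2))` a.e., `-(1/n) log P_n(M_n ≥ 1) → 1/2` and
`-(1/n) log E_Q[L_n² 1_(M_n ≥ 1)] → 1 = 2·(1/2)`, i.e. `Q_n` is asymptotically efficient. -/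
theorem gaussian_shift_efficiency :
    (∀ n : ℕ, ∀ᵐ x ∂(Measure.pi fun _ : Fin n => gaussianReal 1 1),
        (Measure.pi fun _ : Fin n => gaussianReal 0 1).rnDeriv
            (Measure.pi fun _ : Fin n => gaussianReal 1 1) x =
          ENNReal.ofReal (Real.exp (-(n : ℝ) * ((n : ℝ)⁻¹ * ∑ i, x i - 1 / 2)))) ∧
    Tendsto (fun n : ℕ => -expRate n
        ((Measure.pi fun _ : Fin n => gaussianReal 0 1)
          {x : Fin n → ℝ | 1 ≤ (n : ℝ)⁻¹ * ∑ i, x i})) atTop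
      (𝓝 (((1 : ℝ) / 2 : ℝ) : EReal)) ∧
    Tendsto (fun n : ℕ => -expRate n
        (∫⁻ x in {x : Fin n → ℝ | 1 ≤ (n : ℝ)⁻¹ * ∑ i, x i},
          ((Measure.pi fun _ : Fin n => gaussianReal 0 1).rnDeriv
            (Measure.pi fun _ : Fin n => gaussianReal 1 1) x) ^ 2
          ∂(Measure.pi fun _ : Fin n => gaussianReal 1 1))) atTop
      (𝓝 ((1 : ℝ) : EReal)) := by
  refine ⟨?_, ?_, ?_⟩
  · intro n
    filter_upwards [gse_rn n] with x hx
    rw [hx]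
    congr 2
    rcases Nat.eq_zero_or_pos n with rfl | hn
    · simp
    · have hn' : (n : ℝ) ≠ 0 := by exact_mod_cast hn.ne'
      field_simp
  · refine gse_lim 1 zero_le_one _ ?_
    intro n hn
    have hA : MeasurableSet {x : Fin n → ℝ | 1 ≤ (n : ℝ)⁻¹ * ∑ i, x i} :=
      measurableSet_le (by fun_prop) (by fun_prop)
    rw [gse_pi', withDensity_apply _ hA]
    simp
  · have := gse_lim 2 zero_le_two (fun n : ℕ => (∫⁻ x in {x : Fin n → ℝ | 1 ≤ (n : ℝ)⁻¹ * ∑ i, x i},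
          ((Measure.pi fun _ : Fin n => gaussianReal 0 1).rnDeriv
            (Measure.pi fun _ : Fin n => gaussianReal 1 1) x) ^ 2
          ∂(Measure.pi fun _ : Fin n => gaussianReal 1 1))) ?_
    · simpa using this
    intro n hn
    refine lintegral_congr_ae (ae_restrict_of_ae ?_)
    filter_upwards [gse_rn n] with x hx
    rw [hx, ← ENNReal.ofReal_pow (Real.exp_pos _).le, ← Real.exp_nat_mul]
    congr 2
    push_cast
    ring
end

section
/- Let μ ∈ ℝ, σ > 0, and define λ(k,γ) = (k²σ²/2 + μ(γμ + k))/(1 − 2γσ²) − (1/2) log(1 − 2γσ²) for 2γσ² < 1 and λ(k,γ) = +∞ otherwise. Then for every (m, c) ∈ ℝ² with m² < c, sup_{(k,γ)∈ℝ²} { k m + γ c − λ(k,γ) } = ( σ² log(σ²/(c − m²)) + c + μ² − 2μm − σ² ) / (2σ²). -/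
open MeasureTheory Filter Set Topology
open scoped ENNReal NNReal

/-- Legendre–Fenchel transform of the joint SCGF of `(X, X²)` for `X ~ N(μ, σ²)`:
for `m² < c`, `sup_(k,γ) (km + γc - λ(k,γ))` equals the joint rate function
`(σ² log(σ²/(c - m²)) + c + μ² - 2μm - σ²)/(2σ²)`. -/
theorem gaussian_joint_rate_function (μ σ : ℝ) (hσ : 0 < σ) (m c : ℝ) (h : m ^ 2 < c) :
    (⨆ p : ℝ × ℝ,
        (((p.1 * m + p.2 * c : ℝ)) : EReal) -
          (if 2 * p.2 * σ ^ 2 < 1 then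
            (((p.1 ^ 2 * σ ^ 2 / 2 + μ * (p.2 * μ + p.1)) / (1 - 2 * p.2 * σ ^ 2)
              - (1 / 2) * Real.log (1 - 2 * p.2 * σ ^ 2) : ℝ) : EReal)
          else (⊤ : EReal))) =
      (((σ ^ 2 * Real.log (σ ^ 2 / (c - m ^ 2)) + c + μ ^ 2 - 2 * μ * m - σ ^ 2)
        / (2 * σ ^ 2) : ℝ) : EReal) := by
  have hs : 0 < σ ^ 2 := by positivity
  generalize σ ^ 2 = s at hs ⊢
  have hv : 0 < c - m ^ 2 := by linarith
  apply le_antisymm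
  · apply iSup_le
    rintro ⟨k, g⟩
    simp only
    split_ifs with hg
    · rw [← EReal.coe_sub, EReal.coe_le_coe_iff]
      obtain ⟨t, ht⟩ : ∃ t, t = 1 - 2 * g * s := ⟨_, rfl⟩
      have ht0 : 0 < t := by linarith
      have hgt : g = (1 - t) / (2 * s) := by
        rw [ht]; field_simp; ring
      rw [← ht]
      have hlog : Real.log t ≤ Real.log (s / (c - m ^ 2)) + (t * (c - m ^ 2) / s - 1) := by
        have h1 := Real.log_le_sub_one_of_pos (x := t / (s / (c - m ^ 2))) (by positivity)
        rw [Real.log_div ht0.ne' (by positivity)] at h1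
        have h2 : t / (s / (c - m ^ 2)) = t * (c - m ^ 2) / s := by field_simp
        rw [h2] at h1
        linarith
      have key : (s * Real.log (s / (c - m ^ 2)) + c + μ ^ 2 - 2 * μ * m - s) / (2 * s)
          - (k * m + g * c - ((k ^ 2 * s / 2 + μ * (g * μ + k)) / t
            - (1 / 2) * (Real.log (s / (c - m ^ 2)) + (t * (c - m ^ 2) / s - 1))))
          = (k * s - t * m + μ) ^ 2 / (2 * s * t) := by
        rw [hgt]; field_simp; ring
      have : 0 ≤ (k * s - t * m + μ) ^ 2 / (2 * s * t) := by positivity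
      linarith
    · simp
  · refine le_iSup_of_le (m / (c - m ^ 2) - μ / s, 1 / (2 * s) - 1 / (2 * (c - m ^ 2))) ?_
    simp only
    have ht : 1 - 2 * (1 / (2 * s) - 1 / (2 * (c - m ^ 2))) * s = s / (c - m ^ 2) := by
      field_simp; ring
    have ht0 : 0 < s / (c - m ^ 2) := by positivity
    rw [if_pos (by linarith), ht, ← EReal.coe_sub, EReal.coe_le_coe_iff]
    apply le_of_eq
    generalize Real.log (s / (c - m ^ 2)) = L
    obtain ⟨v, hvd⟩ : ∃ v, v = c - m ^ 2 := ⟨_, rfl⟩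
    have hc : c = v + m ^ 2 := by linarith
    rw [← hvd] at hv ⊢
    rw [hc]
    field_simp
    ring
end
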